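/- Assume M ≥ 2. There exist C > 0 and x₀ (depending only on δ, M, K, ξ) such that for all x ≥ x₀, every H ∈ 𝔥₁ and every j ∈ {1, 2}: |E[∑_{q ∈ Q_H} (∑_{−Ky < n ≤ y} λ_b(H; q, n))^j] − ((K+1)y)^j·#Q_H| ≤ C·((K+1)y)^j·#Q_H / H^{M−2}. -/

import Mathlib

open scoped Classical

noncomputable def yy (δ x : ℝ) : ℕ := ⌈x * Real.log x ^ δ⌉₊

noncomputable def zz (δ x : ℝ) : ℝ :=
  (yy δ x : ℝ) * Real.log (Real.log x) ^ 2 / Real.log x ^ (1/2 : ℝ)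

noncomputable def primesUpTo (t : ℝ) : Finset ℕ :=
  (Finset.range (⌊t⌋₊ + 1)).filter fun p => p.Prime ∧ (p : ℝ) ≤ t

noncomputable def PP (t : ℝ) : ℕ := ∏ p ∈ primesUpTo t, p

noncomputable def sigUpTo (t : ℝ) : ℝ := ∏ p ∈ primesUpTo t, (1 - 1 / (p : ℝ))

noncomputable def primesBetween (w t : ℝ) : Finset ℕ :=
  (Finset.range (⌊t⌋₊ + 1)).filter fun p => p.Prime ∧ w < (p : ℝ) ∧ (p : ℝ) ≤ t

noncomputable def sigBetween (w t : ℝ) : ℝ := ∏ p ∈ primesBetween w t, (1 - 1 / (p : ℝ))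

def inS (t : ℝ) (b n : ℤ) : Prop :=
  ∀ p : ℕ, p.Prime → (p : ℝ) ≤ t → ¬ ((p : ℤ) ∣ (n - b))

def inSBetween (w t : ℝ) (b n : ℤ) : Prop :=
  ∀ p : ℕ, p.Prime → w < (p : ℝ) → (p : ℝ) ≤ t → ¬ ((p : ℤ) ∣ (n - b))

noncomputable def countS (t : ℝ) (b lo hi : ℤ) : ℕ :=
  ((Finset.Icc lo hi).filter (inS t b)).card

noncomputable def EE (δ x : ℝ) (g : ℤ → ℝ) : ℝ :=
  (1 / (PP (zz δ x) : ℝ)) * ∑ b ∈ Finset.range (PP (zz δ x)), g (b : ℤ)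

def frakH (δ ξ x : ℝ) : Set ℝ :=
  {H | ∃ j : ℕ, H = ξ ^ j ∧ 2 * (yy δ x : ℝ) / x ≤ H ∧ H ≤ (yy δ x : ℝ) / (ξ * zz δ x)}

def frakH1 (δ ξ x : ℝ) : Set ℝ :=
  {H | ∃ j : ℕ, Even j ∧ H = ξ ^ j ∧ 2 * (yy δ x : ℝ) / x ≤ H ∧ H ≤ (yy δ x : ℝ) / (ξ * zz δ x)}

def frakH2 (δ ξ x : ℝ) : Set ℝ :=
  {H | ∃ j : ℕ, Odd j ∧ H = ξ ^ j ∧ 2 * (yy δ x : ℝ) / x ≤ H ∧ H ≤ (yy δ x : ℝ) / (ξ * zz δ x)}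

noncomputable def QH (δ ξ x H : ℝ) : Finset ℕ :=
  (Finset.range (⌊(yy δ x : ℝ) / H⌋₊ + 1)).filter fun q =>
    q.Prime ∧ (yy δ x : ℝ) / (ξ * H) < (q : ℝ) ∧ (q : ℝ) ≤ (yy δ x : ℝ) / H

noncomputable def Hq (δ ξ x : ℝ) (q : ℕ) : ℝ :=
  if h : ∃ H ∈ frakH δ ξ x, (yy δ x : ℝ) / (ξ * H) < (q : ℝ) ∧ (q : ℝ) ≤ (yy δ x : ℝ) / H
  then h.choose else 1

noncomputable def APset (M : ℝ) (K : ℕ) (b : ℤ) (H : ℝ) (q : ℕ) (n : ℤ) : Finset ℤ :=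
  ((Finset.Icc 1 ⌊(K : ℝ) * H⌋₊).image fun h : ℕ => n + (q : ℤ) * (h : ℤ)).filter (inS (H ^ M) b)

noncomputable def lam (M zv : ℝ) (K : ℕ) (b : ℤ) (H : ℝ) (q : ℕ) (n : ℤ) : ℝ :=
  if ∀ m ∈ APset M K b H q n, inSBetween (H ^ M) zv b m
  then sigBetween (H ^ M) zv ^ (-((APset M K b H q n).card : ℤ))
  else 0

noncomputable def APsetStar (M : ℝ) (K : ℕ) (N b : ℤ) (H : ℝ) (q : ℕ) (n : ℤ) : Finset ℤ :=
  ((Finset.Icc 1 ⌊(K : ℝ) * H⌋₊).image fun h : ℕ => n - (q : ℤ) * (h : ℤ)).filter (inS (H ^ M) (-N - b))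

noncomputable def lamStar (M zv : ℝ) (K : ℕ) (N b : ℤ) (H : ℝ) (q : ℕ) (n : ℤ) : ℝ :=
  if ∀ m ∈ APsetStar M K N b H q n, inSBetween (H ^ M) zv (-N - b) m
  then sigBetween (H ^ M) zv ^ (-((APsetStar M K N b H q n).card : ℤ))
  else 0

/-!
The Chinese remainder theorem allows us to average over the residue class of `b` modulo the primes
up to `H ^ M` and modulo the primes in `(H ^ M, z]` separately. The first residue class determines
the sets `APset`; once it is frozen, `lam` is the indicator that a fixed set `T` of at most `K * H`
elements of a progression survives the sieve by the large primes, divided by `σ ^ #T` with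
`σ = ∏ (1 - 1 / p)`. A prime `p > H ^ M` sees the elements of `T` as distinct residues, so it
contributes the factor `(1 - #T / p) / (1 - 1 / p) ^ #T = 1 + O(H ^ 2 / p ^ 2)`, and the product
over `p` is `1 + O(1 / H ^ (M - 2))`: this is the first moment.

In the second moment, a prime `p` correlates the progressions starting at `n₁` and `n₂` only if it
divides some `n₁ - n₂ + q * k` with `|k| ≤ K * H`. Unless one of these differences vanishes, the
excess is controlled by products of `1 + O(K * H) / p` over the prime divisors of the differences,
which are `1 + O(1 / H ^ (M - 2))` on average over `n₁`. The `O(K * H)` values of `n₁` for which a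
difference does vanish contribute at most `σ ^ (-2 * K * H)` each; by a Mertens bound this is
`exp (O(√log x))`, which is negligible compared with `y`.
-/

open Finset Filter
open scoped BigOperators

section Averages

variable {𝕜 : Type*} [Semifield 𝕜] [CharZero 𝕜]

lemma abs_expect_sub_le {ι : Type*} {s : Finset ι} (hs : s.Nonempty) {f : ι → ℝ} {c ε : ℝ}
    (h : ∀ i ∈ s, |f i - c| ≤ ε) : |𝔼 i ∈ s, f i - c| ≤ ε := by
  rw [← expect_const hs c, ← expect_sub_distrib]
  exact (abs_expect_le _ _).trans (expect_le hs h)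

lemma expect_range_mul_of_coprime {P Q : ℕ} (hP : P ≠ 0) (hQ : Q ≠ 0) (h : P.Coprime Q)
    {F : ℤ → ℤ → 𝕜}
    (hF : ∀ {a a' b b'}, a ≡ a' [ZMOD P] → b ≡ b' [ZMOD Q] → F a b = F a' b') :
    𝔼 b ∈ range (P * Q), F b b = 𝔼 a ∈ range P, 𝔼 b ∈ range Q, F a b := by
  rw [← expect_product']
  refine expect_nbij' (fun b => (b % P, b % Q)) (fun c => (Nat.chineseRemainder h c.1 c.2 : ℕ))
    ?_ ?_ ?_ ?_ ?_
  · intro b _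
    simp [Nat.mod_lt _ (Nat.pos_of_ne_zero hP), Nat.mod_lt _ (Nat.pos_of_ne_zero hQ)]
  · rintro ⟨a, c⟩ _
    simpa using Nat.chineseRemainder_lt_mul h a c hP hQ
  · intro b hb
    exact ((Nat.chineseRemainder_modEq_unique h (Nat.mod_modEq b P).symm
      (Nat.mod_modEq b Q).symm).eq_of_lt_of_lt (mem_range.1 hb)
        (Nat.chineseRemainder_lt_mul h _ _ hP hQ)).symm
  · rintro ⟨a, c⟩ hac
    simp only [mem_product, mem_range] at hac
    have hmod := (Nat.chineseRemainder h a c).2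
    ext
    · exact Eq.trans hmod.1 (Nat.mod_eq_of_lt hac.1)
    · exact Eq.trans hmod.2 (Nat.mod_eq_of_lt hac.2)
  · intro b _
    exact hF (Int.natCast_modEq_iff.2 (Nat.mod_modEq _ _).symm)
      (Int.natCast_modEq_iff.2 (Nat.mod_modEq _ _).symm)

lemma expect_range_prod_of_coprime {ι : Type*} {s : Finset ι} {n : ι → ℕ} (hn : ∀ i ∈ s, n i ≠ 0)
    (hc : (s : Set ι).Pairwise (Function.onFun Nat.Coprime n)) {g : ι → ℤ → 𝕜}
    (hg : ∀ i ∈ s, ∀ a a', a ≡ a' [ZMOD n i] → g i a = g i a') :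
    𝔼 b ∈ range (∏ i ∈ s, n i), ∏ i ∈ s, g i b = ∏ i ∈ s, 𝔼 b ∈ range (n i), g i b := by
  induction s using Finset.induction_on with
  | empty => simp
  | insert i s hi ih =>
    rw [coe_insert, Set.pairwise_insert_of_notMem (mem_coe.not.2 hi)] at hc
    simp only [forall_mem_insert] at hn hg
    simp only [prod_insert hi]
    rw [expect_range_mul_of_coprime hn.1 (prod_ne_zero_iff.2 hn.2)
      (Nat.Coprime.prod_right fun j hj => (hc.2 j hj).1)
      (F := fun a b => g i a * ∏ j ∈ s, g j b), ← ih hn.2 hc.1 hg.2, expect_mul_expect]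
    intro a a' b b' ha hb
    refine congrArg₂ _ (hg.1 a a' ha) (prod_congr rfl fun j hj => hg.2 j hj _ _ (hb.of_dvd ?_))
    exact Int.natCast_dvd_natCast.2 (dvd_prod_of_mem _ hj)

end Averages

/-- The number of residue classes modulo `p` that meet `T`. -/
noncomputable def residueCount (p : ℕ) (T : Finset ℤ) : ℕ := #(T.image ((↑) : ℤ → ZMod p))

lemma residueCount_le_card (p : ℕ) (T : Finset ℤ) : residueCount p T ≤ #T := card_image_le

lemma expect_range_indicator_not_dvd_sub {p : ℕ} (hp : p ≠ 0) (T : Finset ℤ) :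
    𝔼 b ∈ range p, (if ∀ m ∈ T, ¬ (p : ℤ) ∣ m - (b : ℤ) then (1 : ℝ) else 0) =
      1 - residueCount p T / p := by
  have : NeZero p := ⟨hp⟩
  have hdvd (m : ℤ) (b : ℕ) : (p : ℤ) ∣ m - b ↔ (b : ZMod p) = (m : ZMod p) := by
    rw [← ZMod.intCast_eq_intCast_iff_dvd_sub, Int.cast_natCast]
  have hbad : #{b ∈ range p | ¬ ∀ m ∈ T, ¬ (p : ℤ) ∣ m - ((b : ℕ) : ℤ)} = residueCount p T := by
    refine card_bij (fun b _ => (b : ZMod p)) ?_ ?_ ?_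
    · intro b hb
      simp only [mem_filter, not_forall, not_not, hdvd] at hb
      obtain ⟨-, m, hm, hbm⟩ := hb
      exact mem_image.2 ⟨m, hm, hbm.symm⟩
    · intro a ha b hb hab
      rw [mem_filter, mem_range] at ha hb
      exact ((ZMod.natCast_eq_natCast_iff _ _ _).1 hab).eq_of_lt_of_lt ha.1 hb.1
    · intro c hc
      obtain ⟨m, hm, rfl⟩ := mem_image.1 hc
      refine ⟨(m : ZMod p).val, ?_, ZMod.natCast_zmod_val _⟩
      simp only [mem_filter, mem_range, not_forall, not_not, hdvd]
      exact ⟨ZMod.val_lt _, m, hm, ZMod.natCast_zmod_val _⟩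
  have hsum := card_filter_add_card_filter_not (s := range p)
    (fun b : ℕ => ∀ m ∈ T, ¬ (p : ℤ) ∣ m - (b : ℤ))
  rw [hbad, card_range] at hsum
  have hp' : (p : ℝ) ≠ 0 := Nat.cast_ne_zero.2 hp
  rw [expect_eq_sum_div_card, sum_boole, card_range, eq_sub_iff_add_eq, ← add_div,
    div_eq_one_iff_eq hp']
  exact_mod_cast hsum

/-- `m` survives the sieve that deletes the residue class of `b` modulo every `p ∈ s`. -/
def IsSifted (s : Finset ℕ) (b m : ℤ) : Prop := ∀ p ∈ s, ¬ (p : ℤ) ∣ m - b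

lemma dvd_sub_congr {a a' d : ℤ} (h : a ≡ a' [ZMOD d]) (m : ℤ) : d ∣ m - a ↔ d ∣ m - a' := by
  rw [← Int.modEq_iff_dvd, ← Int.modEq_iff_dvd]
  exact ⟨h.symm.trans, h.trans⟩

lemma isSifted_congr {s : Finset ℕ} {b b' : ℤ} (h : b ≡ b' [ZMOD (∏ p ∈ s, p : ℕ)]) (m : ℤ) :
    IsSifted s b m ↔ IsSifted s b' m :=
  forall₂_congr fun _ hp => not_congr <|
    dvd_sub_congr (h.of_dvd (Int.natCast_dvd_natCast.2 (dvd_prod_of_mem _ hp))) m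

lemma expect_indicator_isSifted {s : Finset ℕ} (hs : ∀ p ∈ s, p.Prime) (T : Finset ℤ) :
    𝔼 b ∈ range (∏ p ∈ s, p), (if ∀ m ∈ T, IsSifted s b m then (1 : ℝ) else 0) =
      ∏ p ∈ s, (1 - residueCount p T / (p : ℝ)) := by
  have hind (b : ℤ) : (if ∀ m ∈ T, IsSifted s b m then (1 : ℝ) else 0) =
      ∏ p ∈ s, if ∀ m ∈ T, ¬ (p : ℤ) ∣ m - b then 1 else 0 := by
    rw [prod_ite_zero, prod_const_one]
    exact if_congr ⟨fun h p hp m hm => h m hm p hp, fun h m hm p hp => h p hp m hm⟩ rfl rfl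
  simp only [hind]
  rw [expect_range_prod_of_coprime (n := fun p => p)
    (g := fun p b => if ∀ m ∈ T, ¬ (p : ℤ) ∣ m - b then (1 : ℝ) else 0)
    (fun p hp => (hs p hp).ne_zero) (fun p hp q hq => (Nat.coprime_primes (hs p hp) (hs q hq)).2)
    fun p _ a a' h => by simp only [dvd_sub_congr h]]
  exact prod_congr rfl fun p hp => expect_range_indicator_not_dvd_sub (hs p hp).ne_zero T

lemma mem_primesUpTo {t : ℝ} {p : ℕ} : p ∈ primesUpTo t ↔ p.Prime ∧ (p : ℝ) ≤ t := by
  simp only [primesUpTo, mem_filter, mem_range, and_iff_right_iff_imp]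
  exact fun h => Nat.lt_succ_of_le (Nat.le_floor h.2)

lemma mem_primesBetween {w t : ℝ} {p : ℕ} :
    p ∈ primesBetween w t ↔ p.Prime ∧ w < (p : ℝ) ∧ (p : ℝ) ≤ t := by
  simp only [primesBetween, mem_filter, mem_range, and_iff_right_iff_imp]
  exact fun h => Nat.lt_succ_of_le (Nat.le_floor h.2.2)

lemma inS_iff_isSifted {t : ℝ} {b m : ℤ} : inS t b m ↔ IsSifted (primesUpTo t) b m := by
  simp only [inS, IsSifted, mem_primesUpTo, and_imp]

lemma inSBetween_iff_isSifted {w t : ℝ} {b m : ℤ} :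
    inSBetween w t b m ↔ IsSifted (primesBetween w t) b m := by
  simp only [inSBetween, IsSifted, mem_primesBetween, and_imp]

lemma disjoint_primesUpTo_primesBetween (w t : ℝ) :
    Disjoint (primesUpTo w) (primesBetween w t) :=
  disjoint_left.2 fun _ h h' => (mem_primesBetween.1 h').2.1.not_ge (mem_primesUpTo.1 h).2

lemma primesUpTo_union_primesBetween {w t : ℝ} (h : w ≤ t) :
    primesUpTo w ∪ primesBetween w t = primesUpTo t := by
  ext p
  simp only [mem_union, mem_primesUpTo, mem_primesBetween, ← and_or_left]
  refine and_congr_right fun _ => ⟨?_, fun hp => (le_or_gt (p : ℝ) w).imp_right fun hw => ⟨hw, hp⟩⟩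
  rintro (hp | ⟨-, hp⟩)
  · exact hp.trans h
  · exact hp

lemma PP_eq_mul_prod_primesBetween {w t : ℝ} (h : w ≤ t) :
    PP t = PP w * ∏ p ∈ primesBetween w t, p := by
  rw [PP, PP, ← prod_union (disjoint_primesUpTo_primesBetween w t),
    primesUpTo_union_primesBetween h]

lemma coprime_PP_prod_primesBetween (w t : ℝ) :
    (PP w).Coprime (∏ p ∈ primesBetween w t, p) :=
  Nat.Coprime.prod_left fun _ hp => Nat.Coprime.prod_right fun _ hr =>
    (Nat.coprime_primes (mem_primesUpTo.1 hp).1 (mem_primesBetween.1 hr).1).2 fun h =>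
      disjoint_left.1 (disjoint_primesUpTo_primesBetween w t) hp (h ▸ hr)

lemma PP_pos (t : ℝ) : 0 < PP t := prod_pos fun _ hp => (mem_primesUpTo.1 hp).1.pos

lemma EE_eq_expect (δ x : ℝ) (g : ℤ → ℝ) : EE δ x g = 𝔼 b ∈ range (PP (zz δ x)), g b := by
  rw [EE, expect_eq_sum_div_card, card_range, one_div_mul_eq_div]

/-- The proportion of residues modulo `∏ p ∈ s, p` that avoid one given class modulo every
`p ∈ s`, for a set `s` of primes. -/
noncomputable def sieveDensity (s : Finset ℕ) : ℝ := ∏ p ∈ s, (1 - 1 / (p : ℝ))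

lemma one_div_prime_lt_one {p : ℕ} (hp : p.Prime) : 1 / (p : ℝ) < 1 :=
  (div_lt_one (Nat.cast_pos.2 hp.pos)).2 (Nat.one_lt_cast.2 hp.one_lt)

section SieveDensity

variable {s : Finset ℕ}

lemma sieveDensity_pos (hs : ∀ p ∈ s, p.Prime) : 0 < sieveDensity s :=
  prod_pos fun p hp => sub_pos.2 (one_div_prime_lt_one (hs p hp))

lemma sieveDensity_le_one (hs : ∀ p ∈ s, p.Prime) : sieveDensity s ≤ 1 :=
  prod_le_one (fun p hp => sub_nonneg.2 (one_div_prime_lt_one (hs p hp)).le)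
    fun _ _ => sub_le_self _ (by positivity)

lemma exp_neg_sub_sq_le_one_sub {t : ℝ} (h0 : 0 ≤ t) (h1 : t ≤ 1 / 2) :
    Real.exp (-t - t ^ 2) ≤ 1 - t := by
  have hinv : (1 - t)⁻¹ ≤ 1 + (t + t ^ 2) + (t + t ^ 2) ^ 2 / 2 := by
    rw [inv_le_iff_one_le_mul₀ (by linarith)]
    have ht : 0 ≤ t ^ 2 * (1 / 2 - t) := mul_nonneg (sq_nonneg _) (by linarith)
    nlinarith [mul_nonneg (sq_nonneg t) h0, mul_nonneg ht h0, mul_nonneg (mul_nonneg ht h0) h0]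
  rw [← neg_add', Real.exp_neg]
  exact inv_le_of_inv_le₀ (by linarith)
    (hinv.trans (Real.quadratic_le_exp_of_nonneg (by positivity)))

lemma one_sub_pow_mul_exp_le_one_sub_mul {x : ℝ} {R : ℕ} (h0 : 0 ≤ x) (h1 : x ≤ 1)
    (hR : R * x ≤ 1 / 2) : (1 - x) ^ R * Real.exp (-(R * x) ^ 2) ≤ 1 - R * x :=
  calc (1 - x) ^ R * Real.exp (-(R * x) ^ 2)
      ≤ Real.exp (-x) ^ R * Real.exp (-(R * x) ^ 2) := by
        have := sub_nonneg.2 h1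
        gcongr
        exact Real.one_sub_le_exp_neg x
    _ = Real.exp (-(R * x) - (R * x) ^ 2) := by
        rw [← Real.exp_nat_mul, ← Real.exp_add]
        ring_nf
    _ ≤ 1 - R * x := exp_neg_sub_sq_le_one_sub (by positivity) hR

lemma one_sub_mul_le_one_sub_pow_mul {x ν c : ℝ} {R : ℕ} (h0 : 0 ≤ x) (h1 : x ≤ 1)
    (hR : R * x ≤ 1 / 2) (hc : 0 ≤ c) (hν : R ≤ ν + c) :
    1 - ν * x ≤ (1 - x) ^ R * (1 + 2 * c * x) := by
  have hB : 1 - R * x ≤ (1 - x) ^ R := by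
    simpa [← sub_eq_add_neg] using one_add_mul_le_pow (a := -x) (by linarith) R
  have hcx : 0 ≤ c * x := mul_nonneg hc h0
  calc 1 - ν * x ≤ 1 - R * x + c * x := by nlinarith
    _ ≤ (1 - R * x) * (1 + 2 * c * x) := by nlinarith
    _ ≤ (1 - x) ^ R * (1 + 2 * c * x) := by gcongr

lemma sum_inv_sq_le {w : ℝ} (hw : 0 < w) (hs : ∀ p ∈ s, w < (p : ℝ)) :
    ∑ p ∈ s, ((p : ℝ) ^ 2)⁻¹ ≤ 2 / w :=
  calc ∑ p ∈ s, ((p : ℝ) ^ 2)⁻¹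
      ≤ ∑ p ∈ Ioo ⌊w⌋₊ (s.sup id + 1), ((p : ℝ) ^ 2)⁻¹ := by
        refine sum_le_sum_of_subset_of_nonneg (fun p hp => ?_) fun _ _ _ => by positivity
        exact mem_Ioo.2 ⟨(Nat.floor_lt hw.le).2 (hs p hp),
          Nat.lt_succ_of_le (le_sup (f := id) hp)⟩
    _ ≤ 2 / (⌊w⌋₊ + 1) := sum_Ioo_inv_sq_le _ _
    _ ≤ 2 / w := by
        gcongr
        exact (Nat.lt_floor_add_one w).le

lemma one_div_natCast_le_one (n : ℕ) : 1 / (n : ℝ) ≤ 1 := by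
  rw [one_div]
  exact Nat.cast_inv_le_one n

lemma mul_one_div_le_half {R w p : ℝ} (hw : 0 < w) (hR : 2 * R ≤ w) (hp : w < p) :
    R * (1 / p) ≤ 1 / 2 := by
  rw [mul_one_div, div_le_iff₀ (hw.trans hp)]
  linarith

lemma sieveDensity_pow_mul_le_prod {w : ℝ} (hw : 0 < w) (hs : ∀ p ∈ s, w < (p : ℝ)) {R : ℕ}
    (hR : 2 * (R : ℝ) ≤ w) {ν : ℕ → ℕ} (hν : ∀ p ∈ s, ν p ≤ R) :
    sieveDensity s ^ R * (1 - 2 * (R : ℝ) ^ 2 / w) ≤ ∏ p ∈ s, (1 - ν p / (p : ℝ)) := by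
  have hnonneg (p : ℕ) : 0 ≤ 1 - 1 / (p : ℝ) := sub_nonneg.2 (one_div_natCast_le_one p)
  have hexp : 1 - 2 * (R : ℝ) ^ 2 / w ≤ ∏ p ∈ s, Real.exp (-(R * (1 / (p : ℝ))) ^ 2) :=
    calc 1 - 2 * (R : ℝ) ^ 2 / w = 1 - R ^ 2 * (2 / w) := by ring
      _ ≤ 1 - R ^ 2 * ∑ p ∈ s, ((p : ℝ) ^ 2)⁻¹ := by
          gcongr
          exact sum_inv_sq_le hw hs
      _ ≤ Real.exp (-(R ^ 2 * ∑ p ∈ s, ((p : ℝ) ^ 2)⁻¹)) := Real.one_sub_le_exp_neg _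
      _ = ∏ p ∈ s, Real.exp (-(R * (1 / (p : ℝ))) ^ 2) := by
          rw [← Real.exp_sum, sum_neg_distrib, mul_sum]
          simp only [mul_pow, one_div, inv_pow]
  calc sieveDensity s ^ R * (1 - 2 * (R : ℝ) ^ 2 / w)
      ≤ sieveDensity s ^ R * ∏ p ∈ s, Real.exp (-(R * (1 / (p : ℝ))) ^ 2) :=
        mul_le_mul_of_nonneg_left hexp (pow_nonneg (prod_nonneg fun p _ => hnonneg p) _)
    _ = ∏ p ∈ s, (1 - 1 / (p : ℝ)) ^ R * Real.exp (-(R * (1 / (p : ℝ))) ^ 2) := by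
        rw [sieveDensity, ← prod_pow, prod_mul_distrib]
    _ ≤ ∏ p ∈ s, (1 - ν p / (p : ℝ)) := by
        refine prod_le_prod (fun p _ => mul_nonneg (pow_nonneg (hnonneg p) _) (Real.exp_nonneg _))
          fun p hp => ?_
        refine (one_sub_pow_mul_exp_le_one_sub_mul (by positivity) (one_div_natCast_le_one p)
          (mul_one_div_le_half hw hR (hs p hp))).trans ?_
        rw [mul_one_div]
        gcongr
        exact hν p hp

lemma prod_one_sub_div_le_sieveDensity_pow_mul {w : ℝ} (hw : 0 < w) (hs : ∀ p ∈ s, w < (p : ℝ))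
    {R : ℕ} (hR : 2 * (R : ℝ) ≤ w) {ν : ℕ → ℕ} (hν : ∀ p ∈ s, ν p ≤ R) {c : ℕ → ℝ}
    (hc0 : ∀ p ∈ s, 0 ≤ c p) (hc : ∀ p ∈ s, (R : ℝ) ≤ ν p + c p) :
    ∏ p ∈ s, (1 - ν p / (p : ℝ)) ≤ sieveDensity s ^ R * ∏ p ∈ s, (1 + 2 * c p / p) := by
  rw [sieveDensity, ← prod_pow, ← prod_mul_distrib]
  refine prod_le_prod (fun p hp => ?_) fun p hp => ?_
  · have hνR : (ν p : ℝ) ≤ R := by exact_mod_cast hν p hp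
    have := mul_one_div_le_half hw ((mul_le_mul_of_nonneg_left hνR zero_le_two).trans hR) (hs p hp)
    rw [mul_one_div] at this
    linarith
  · simpa only [mul_one_div] using one_sub_mul_le_one_sub_pow_mul (one_div_nonneg.2 p.cast_nonneg)
      (one_div_natCast_le_one p) (mul_one_div_le_half hw hR (hs p hp)) (hc0 p hp) (hc p hp)

end SieveDensity

lemma exp_le_one_add_mul_exp {t c : ℝ} (h0 : 0 ≤ t) (h1 : t ≤ c) :
    Real.exp t ≤ 1 + t * Real.exp c := by
  have hcancel : Real.exp (-t) * Real.exp t = 1 := by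
    rw [← Real.exp_add, neg_add_cancel, Real.exp_zero]
  have hmul := mul_le_mul_of_nonneg_right (Real.one_sub_le_exp_neg t) (Real.exp_nonneg t)
  have hmono := mul_le_mul_of_nonneg_left (Real.exp_le_exp.2 h1) h0
  linarith

/-- The product of `1 + B / p` over the `p ∈ s` dividing `m`; it measures how many small primes
divide `m`, weighted by their size. -/
noncomputable def divisorWeight (s : Finset ℕ) (B : ℝ) (m : ℤ) : ℝ :=
  ∏ p ∈ s with ((p : ℕ) : ℤ) ∣ m, (1 + B / (p : ℝ))

section DivisorWeight

variable {s : Finset ℕ} {B : ℝ}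

lemma one_le_divisorWeight (hB : 0 ≤ B) (m : ℤ) : 1 ≤ divisorWeight s B m :=
  Finset.one_le_prod fun _ _ => le_add_of_nonneg_right (by positivity)

lemma divisorWeight_neg (m : ℤ) : divisorWeight s B (-m) = divisorWeight s B m := by
  simp only [divisorWeight, dvd_neg]

lemma sum_divisorWeight_le_mul_prod (hs : ∀ p ∈ s, p.Prime) (hB : 0 ≤ B) (X : ℕ) :
    ∑ m ∈ Ioc 0 X, divisorWeight s B m ≤ X * ∏ p ∈ s, (1 + B / (p : ℝ) ^ 2) := by
  have hdvd {A : Finset ℕ} (hA : A ⊆ s) (m : ℕ) : ∏ p ∈ A, p ∣ m ↔ ∀ p ∈ A, (p : ℤ) ∣ m :=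
    ⟨fun h p hp => Int.natCast_dvd_natCast.2 ((dvd_prod_of_mem _ hp).trans h),
      fun h => prod_primes_dvd m (fun p hp => (hs p (hA hp)).prime)
        fun p hp => Int.natCast_dvd_natCast.1 (h p hp)⟩
  have hcount (A : Finset ℕ) : (#{m ∈ Ioc 0 X | ∏ p ∈ A, p ∣ m} : ℝ) * ∏ p ∈ A, B / (p : ℝ) ≤
      X * ∏ p ∈ A, B / (p : ℝ) ^ 2 := by
    rw [Nat.Ioc_filter_dvd_card_eq_div]
    calc ((X / ∏ p ∈ A, p : ℕ) : ℝ) * ∏ p ∈ A, B / (p : ℝ)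
        ≤ X / (∏ p ∈ A, p : ℕ) * ∏ p ∈ A, B / (p : ℝ) :=
          mul_le_mul_of_nonneg_right Nat.cast_div_le (prod_nonneg fun p _ => by positivity)
      _ = X * ∏ p ∈ A, B / (p : ℝ) ^ 2 := by
          rw [Nat.cast_prod, div_mul_eq_mul_div, mul_div_assoc, ← prod_div_distrib]
          simp only [div_div, sq]
  calc ∑ m ∈ Ioc 0 X, divisorWeight s B m
      = ∑ A ∈ s.powerset, ∑ m ∈ Ioc 0 X with ∏ p ∈ A, p ∣ m, ∏ p ∈ A, B / (p : ℝ) := by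
        simp only [divisorWeight, prod_one_add]
        refine sum_comm' fun m A => ?_
        have hmem : A ⊆ {p ∈ s | ((p : ℕ) : ℤ) ∣ m} ↔ A ⊆ s ∧ ∏ p ∈ A, p ∣ m := by
          simp only [subset_iff, mem_filter, forall_and]
          exact and_congr_right fun hA => (hdvd hA m).symm
        simp only [mem_powerset, mem_filter, hmem, and_left_comm, and_comm]
    _ ≤ ∑ A ∈ s.powerset, X * ∏ p ∈ A, B / (p : ℝ) ^ 2 := by
        refine sum_le_sum fun A _ => ?_
        rw [sum_const, nsmul_eq_mul]
        exact hcount A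
    _ = X * ∏ p ∈ s, (1 + B / (p : ℝ) ^ 2) := by rw [← mul_sum, prod_one_add]

lemma prod_one_add_div_sq_le_exp {w : ℝ} (hw : 0 < w) (hs : ∀ p ∈ s, w < (p : ℝ)) (hB : 0 ≤ B) :
    ∏ p ∈ s, (1 + B / (p : ℝ) ^ 2) ≤ Real.exp (2 * B / w) :=
  calc ∏ p ∈ s, (1 + B / (p : ℝ) ^ 2) ≤ Real.exp (∑ p ∈ s, B / (p : ℝ) ^ 2) := by
        rw [Real.exp_sum]
        exact prod_le_prod (fun p _ => by positivity) fun p _ =>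
          (add_comm _ _).trans_le (Real.add_one_le_exp _)
    _ = Real.exp (B * ∑ p ∈ s, ((p : ℝ) ^ 2)⁻¹) := by simp only [mul_sum, div_eq_mul_inv]
    _ ≤ Real.exp (B * (2 / w)) := by
        gcongr
        exact sum_inv_sq_le hw hs
    _ = Real.exp (2 * B / w) := by ring_nf

lemma sum_Ioc_divisorWeight_sub_one_le {w : ℝ} (hw : 0 < w)
    (hs : ∀ p ∈ s, p.Prime ∧ w < (p : ℝ)) (hB : 0 ≤ B) (X : ℕ) :
    ∑ m ∈ Ioc 0 X, (divisorWeight s B m - 1) ≤ X * (Real.exp (2 * B / w) - 1) :=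
  calc ∑ m ∈ Ioc 0 X, (divisorWeight s B m - 1)
      = ∑ m ∈ Ioc 0 X, divisorWeight s B m - X := by simp
    _ ≤ X * Real.exp (2 * B / w) - X := by
        gcongr
        refine (sum_divisorWeight_le_mul_prod (fun p hp => (hs p hp).1) hB X).trans ?_
        gcongr
        exact prod_one_add_div_sq_le_exp hw (fun p hp => (hs p hp).2) hB
    _ = X * (Real.exp (2 * B / w) - 1) := by ring

lemma sum_divisorWeight_sub_one_le {w : ℝ} (hw : 0 < w) (hs : ∀ p ∈ s, p.Prime ∧ w < (p : ℝ))
    (hB : 0 ≤ B) (X : ℕ) {J : Finset ℤ} (hJ : ∀ m ∈ J, m ≠ 0 ∧ |m| ≤ X) :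
    ∑ m ∈ J, (divisorWeight s B m - 1) ≤ 2 * X * (Real.exp (2 * B / w) - 1) := by
  have hnonneg (m : ℤ) : 0 ≤ divisorWeight s B m - 1 := sub_nonneg.2 (one_le_divisorWeight hB m)
  have habs (m : ℤ) : divisorWeight s B m = divisorWeight s B m.natAbs := by
    rcases m.natAbs_eq with h | h <;> nth_rw 1 [h]
    exact divisorWeight_neg _
  have hfibre (k : ℕ) : #{m ∈ J | m.natAbs = k} ≤ 2 := by
    refine (card_le_card fun m hm => ?_).trans (card_le_two (a := (k : ℤ)) (b := -k))
    simpa [Int.natAbs_eq_iff] using (mem_filter.1 hm).2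
  calc ∑ m ∈ J, (divisorWeight s B m - 1)
      = ∑ k ∈ Ioc 0 X, ∑ m ∈ J with m.natAbs = k, (divisorWeight s B (k : ℤ) - 1) := by
        rw [← sum_fiberwise_of_maps_to (g := Int.natAbs) (t := Ioc 0 X)]
        · refine sum_congr rfl fun k _ => sum_congr rfl fun m hm => ?_
          rw [habs, (mem_filter.1 hm).2]
        · intro m hm
          obtain ⟨h0, hX⟩ := hJ m hm
          rw [mem_Ioc, Int.natAbs_pos, ← Nat.cast_le (α := ℤ), Int.natCast_natAbs]
          exact ⟨h0, hX⟩
    _ ≤ ∑ k ∈ Ioc 0 X, 2 * (divisorWeight s B (k : ℤ) - 1) := by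
        refine sum_le_sum fun k _ => ?_
        rw [sum_const, nsmul_eq_mul]
        exact mul_le_mul_of_nonneg_right (by exact_mod_cast hfibre k) (hnonneg k)
    _ ≤ 2 * X * (Real.exp (2 * B / w) - 1) := by
        rw [← mul_sum, mul_assoc]
        gcongr
        exact sum_Ioc_divisorWeight_sub_one_le hw hs hB X

end DivisorWeight

lemma prod_le_expect_pow_card {ι : Type*} {s : Finset ι} (hs : s.Nonempty) {a : ι → ℝ}
    (ha : ∀ i ∈ s, 0 ≤ a i) : ∏ i ∈ s, a i ≤ 𝔼 i ∈ s, a i ^ #s := by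
  have hcard : #s ≠ 0 := hs.card_pos.ne'
  have hAMGM := Real.geom_mean_le_arith_mean_weighted s (fun _ => (#s : ℝ)⁻¹) (fun i => a i ^ #s)
    (fun _ _ => by positivity) (by simp [hcard]) (fun i hi => pow_nonneg (ha i hi) _)
  rw [← mul_sum, inv_mul_eq_div, ← expect_eq_sum_div_card] at hAMGM
  exact (prod_congr rfl fun i hi => (Real.pow_rpow_inv_natCast (ha i hi) hcard).symm).trans_le hAMGM

lemma prod_filter_exists_le_prod_prod_filter {ι κ : Type*} {s : Finset ι} (I : Finset κ)
    (r : κ → ι → Prop) [∀ k, DecidablePred (r k)] {f : ι → ℝ} (hf : ∀ i ∈ s, 1 ≤ f i) :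
    ∏ i ∈ s with ∃ k ∈ I, r k i, f i ≤ ∏ k ∈ I, ∏ i ∈ s with r k i, f i := by
  simp only [prod_filter]
  rw [Finset.prod_comm]
  refine prod_le_prod (fun i hi => ?_) fun i hi => ?_
  · have := zero_le_one.trans (hf i hi)
    split_ifs <;> positivity
  · rw [← prod_filter, prod_const]
    split_ifs with h
    · exact le_self_pow₀ (hf i hi) (card_ne_zero.2 (filter_nonempty_iff.2 h))
    · exact one_le_pow₀ (hf i hi)

lemma one_add_div_pow_le {p c : ℝ} {L : ℕ} (hp : 0 < p) (hL : 6 * (L : ℝ) ^ 2 ≤ c * p) :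
    (1 + 2 * L / p) ^ (2 * L + 1) ≤ 1 + 6 * L ^ 2 * Real.exp c / p := by
  have hLL : (L : ℝ) ≤ (L : ℝ) ^ 2 := by exact_mod_cast Nat.le_self_pow two_ne_zero L
  have hexponent : ((2 * L + 1 : ℕ) : ℝ) * (2 * L / p) ≤ 6 * L ^ 2 / p := by
    rw [← mul_div_assoc]
    refine div_le_div_of_nonneg_right ?_ hp.le
    push_cast
    linarith
  calc (1 + 2 * L / p) ^ (2 * L + 1) ≤ Real.exp (2 * L / p) ^ (2 * L + 1) := by
        gcongr
        exact (add_comm _ _).trans_le (Real.add_one_le_exp _)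
    _ = Real.exp ((2 * L + 1 : ℕ) * (2 * L / p)) := (Real.exp_nat_mul _ _).symm
    _ ≤ Real.exp (6 * L ^ 2 / p) := Real.exp_le_exp.2 hexponent
    _ ≤ 1 + 6 * L ^ 2 / p * Real.exp c :=
        exp_le_one_add_mul_exp (by positivity) ((div_le_iff₀ hp).2 hL)
    _ = 1 + 6 * L ^ 2 * Real.exp c / p := by ring

lemma divisorWeight_pow_le {s : Finset ℕ} {w c : ℝ} {L : ℕ} (hw : 0 < w)
    (hs : ∀ p ∈ s, w < (p : ℝ)) (hc : 0 ≤ c) (hL : 6 * (L : ℝ) ^ 2 ≤ c * w) (m : ℤ) :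
    divisorWeight s (2 * L) m ^ (2 * L + 1) ≤ divisorWeight s (6 * L ^ 2 * Real.exp c) m := by
  rw [divisorWeight, divisorWeight, ← prod_pow]
  refine prod_le_prod (fun p _ => by positivity) fun p hp => ?_
  have hwp := hs p (mem_filter.1 hp).1
  exact one_add_div_pow_le (hw.trans hwp) (hL.trans (by gcongr))

lemma card_Icc_neg_natCast (L : ℕ) : #(Icc (-(L : ℤ)) L) = 2 * L + 1 := by
  rw [Int.card_Icc]
  omega

-- AM-GM over the `2 * L + 1` shifts `k` decouples them: the product over `k` of divisor weights
-- becomes an average of single divisor weights with the larger parameter `6 * L ^ 2 * exp c`.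
lemma prod_exists_dvd_le_expect_divisorWeight {s : Finset ℕ} {w c : ℝ} {L : ℕ} (hw : 0 < w)
    (hs : ∀ p ∈ s, w < (p : ℝ)) (hc : 0 ≤ c) (hL : 6 * (L : ℝ) ^ 2 ≤ c * w) (f : ℤ → ℤ) :
    ∏ p ∈ s with ∃ k ∈ Icc (-(L : ℤ)) L, ((p : ℕ) : ℤ) ∣ f k, (1 + 2 * L / (p : ℝ)) ≤
      𝔼 k ∈ Icc (-(L : ℤ)) L, divisorWeight s (6 * L ^ 2 * Real.exp c) (f k) := by
  set I := Icc (-(L : ℤ)) L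
  have hdecouple : ∏ p ∈ s with ∃ k ∈ I, ((p : ℕ) : ℤ) ∣ f k, (1 + 2 * L / (p : ℝ)) ≤
      ∏ k ∈ I, divisorWeight s (2 * L) (f k) :=
    prod_filter_exists_le_prod_prod_filter I (fun k (p : ℕ) => (p : ℤ) ∣ f k)
      (f := fun p : ℕ => 1 + 2 * L / (p : ℝ)) fun p _ => le_add_of_nonneg_right (by positivity)
  have hAMGM : ∏ k ∈ I, divisorWeight s (2 * L) (f k) ≤
      𝔼 k ∈ I, divisorWeight s (2 * L) (f k) ^ (2 * L + 1) := by
    rw [← card_Icc_neg_natCast]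
    exact prod_le_expect_pow_card ⟨0, by simp [I]⟩
      fun k _ => zero_le_one.trans (one_le_divisorWeight (by positivity) _)
  exact hdecouple.trans (hAMGM.trans
    (expect_le_expect fun k _ => divisorWeight_pow_le hw hs hc hL (f k)))

/-- The arithmetic progression `n + q * h`, `1 ≤ h ≤ L`. -/
noncomputable def progression (L q : ℕ) (n : ℤ) : Finset ℤ :=
  (Icc 1 L).image fun h : ℕ => n + (q : ℤ) * (h : ℤ)

section Progression

variable {L q p : ℕ} {n : ℤ} {T : Finset ℤ}

lemma card_le_of_subset_progression (hT : T ⊆ progression L q n) : #T ≤ L := by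
  simpa using (card_le_card hT).trans card_image_le

lemma residueCount_eq_card_of_subset_progression (hp : p.Prime) (hpq : ¬ p ∣ q) (hLp : L < p)
    (hT : T ⊆ progression L q n) : residueCount p T = #T := by
  refine card_image_of_injOn fun a ha b hb hab => ?_
  obtain ⟨i, hi, rfl⟩ := mem_image.1 (hT ha)
  obtain ⟨j, hj, rfl⟩ := mem_image.1 (hT hb)
  have hdvd : (p : ℤ) ∣ q * ((j : ℤ) - i) := by
    convert! (ZMod.intCast_eq_intCast_iff_dvd_sub _ _ p).1 hab using 1
    ring
  have hji : (j : ℤ) - i = 0 := by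
    refine Int.eq_zero_of_abs_lt_dvd (((Nat.prime_iff_prime_int.1 hp).dvd_or_dvd hdvd).resolve_left
      fun h => hpq (Int.natCast_dvd_natCast.1 h)) ?_
    rw [mem_Icc] at hi hj
    rw [abs_lt]
    omega
  rw [sub_eq_zero.1 hji]

lemma card_add_card_le_residueCount_add (hp : p.Prime) (hpq : ¬ p ∣ q) (hLp : L < p) {n₁ n₂ : ℤ}
    {T₁ T₂ : Finset ℤ} (hT₁ : T₁ ⊆ progression L q n₁) (hT₂ : T₂ ⊆ progression L q n₂) :
    #T₁ + #T₂ ≤ residueCount p (T₁ ∪ T₂) +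
      if ∃ k ∈ Icc (-(L : ℤ)) L, (p : ℤ) ∣ n₁ - n₂ + q * k then L else 0 := by
  have h₁ := residueCount_eq_card_of_subset_progression hp hpq hLp hT₁
  have h₂ := residueCount_eq_card_of_subset_progression hp hpq hLp hT₂
  rw [residueCount] at h₁ h₂ ⊢
  rw [image_union]
  split_ifs with h
  · have hle := card_le_card (subset_union_right (s₁ := T₁.image ((↑) : ℤ → ZMod p))
      (s₂ := T₂.image ((↑) : ℤ → ZMod p)))
    have := card_le_of_subset_progression hT₁
    omega
  · rw [card_union_of_disjoint, h₁, h₂, add_zero]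
    refine disjoint_left.2 fun r hr₁ hr₂ => h ?_
    obtain ⟨a, ha, rfl⟩ := mem_image.1 hr₁
    obtain ⟨b, hb, hab⟩ := mem_image.1 hr₂
    obtain ⟨i, hi, rfl⟩ := mem_image.1 (hT₁ ha)
    obtain ⟨j, hj, rfl⟩ := mem_image.1 (hT₂ hb)
    rw [mem_Icc] at hi hj
    refine ⟨(i : ℤ) - j, by rw [mem_Icc]; omega, ?_⟩
    convert! (ZMod.intCast_eq_intCast_iff_dvd_sub _ _ p).1 hab using 1
    ring

end Progression

/-- The indicator that `b` sifts out no element of `T`, normalised by the probability of this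
event were the elements of `T` sifted independently. -/
noncomputable def sieveWeight (s : Finset ℕ) (T : Finset ℤ) (b : ℤ) : ℝ :=
  if ∀ m ∈ T, IsSifted s b m then (sieveDensity s ^ #T)⁻¹ else 0

lemma sieveWeight_empty (s : Finset ℕ) (b : ℤ) : sieveWeight s ∅ b = 1 := by
  simp [sieveWeight]

lemma sieveWeight_mul (s : Finset ℕ) (T₁ T₂ : Finset ℤ) (b : ℤ) :
    sieveWeight s T₁ b * sieveWeight s T₂ b =
      (sieveDensity s ^ (#T₁ + #T₂))⁻¹ * if ∀ m ∈ T₁ ∪ T₂, IsSifted s b m then 1 else 0 := by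
  simp only [sieveWeight, ite_zero_mul_ite_zero]
  simp only [mul_ite, mul_one, mul_zero, pow_add, mul_inv, forall_mem_union]

section SieveWeight

variable {s : Finset ℕ} {T T₁ T₂ : Finset ℤ} {L : ℕ} {w : ℝ}

lemma sieveWeight_nonneg (hs : ∀ p ∈ s, p.Prime) (T : Finset ℤ) (b : ℤ) :
    0 ≤ sieveWeight s T b := by
  have := sieveDensity_pos hs
  rw [sieveWeight]
  split_ifs <;> positivity

lemma sieveWeight_le (hs : ∀ p ∈ s, p.Prime) (hT : #T ≤ L) (b : ℤ) :
    sieveWeight s T b ≤ (sieveDensity s ^ L)⁻¹ := by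
  have hpos := sieveDensity_pos hs
  rw [sieveWeight]
  split_ifs
  · exact inv_anti₀ (by positivity) (pow_le_pow_of_le_one hpos.le (sieveDensity_le_one hs) hT)
  · positivity

lemma expect_sieveWeight_mul (hs : ∀ p ∈ s, p.Prime) (T₁ T₂ : Finset ℤ) :
    𝔼 b ∈ range (∏ p ∈ s, p), sieveWeight s T₁ b * sieveWeight s T₂ b =
      (sieveDensity s ^ (#T₁ + #T₂))⁻¹ *
        ∏ p ∈ s, (1 - residueCount p (T₁ ∪ T₂) / (p : ℝ)) := by
  simp only [sieveWeight_mul]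
  rw [← mul_expect, expect_indicator_isSifted hs]

lemma expect_sieveWeight_mul_le_inv_sieveDensity_pow (hs : ∀ p ∈ s, p.Prime) (h₁ : #T₁ ≤ L)
    (h₂ : #T₂ ≤ L) :
    𝔼 b ∈ range (∏ p ∈ s, p), sieveWeight s T₁ b * sieveWeight s T₂ b ≤
      (sieveDensity s ^ (2 * L))⁻¹ := by
  have hpos := sieveDensity_pos hs
  refine expect_le (nonempty_range_iff.2 (prod_ne_zero_iff.2 fun p hp => (hs p hp).ne_zero))
    fun b _ => ?_
  rw [two_mul, pow_add, mul_inv]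
  exact mul_le_mul (sieveWeight_le hs h₁ b) (sieveWeight_le hs h₂ b) (sieveWeight_nonneg hs T₂ b)
    (by positivity)

lemma one_sub_le_expect_sieveWeight_mul (hs : ∀ p ∈ s, p.Prime) (hw : 0 < w)
    (hws : ∀ p ∈ s, w < (p : ℝ)) (hL : 4 * (L : ℝ) ≤ w) (h₁ : #T₁ ≤ L) (h₂ : #T₂ ≤ L) :
    1 - 8 * L ^ 2 / w ≤ 𝔼 b ∈ range (∏ p ∈ s, p), sieveWeight s T₁ b * sieveWeight s T₂ b := by
  have hR : ((#T₁ + #T₂ : ℕ) : ℝ) ≤ 2 * L := by exact_mod_cast (by omega : #T₁ + #T₂ ≤ 2 * L)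
  have hprod := sieveDensity_pow_mul_le_prod hw hws (R := #T₁ + #T₂) (by linarith)
    (ν := fun p => residueCount p (T₁ ∪ T₂))
    fun p _ => (residueCount_le_card _ _).trans (card_union_le _ _)
  rw [expect_sieveWeight_mul hs, inv_mul_eq_div, le_div_iff₀' (pow_pos (sieveDensity_pos hs) _)]
  refine le_trans (mul_le_mul_of_nonneg_left ?_ (pow_nonneg (sieveDensity_pos hs).le _)) hprod
  calc 1 - 8 * L ^ 2 / w = 1 - 2 * (2 * L : ℝ) ^ 2 / w := by ring
    _ ≤ 1 - 2 * ((#T₁ + #T₂ : ℕ) : ℝ) ^ 2 / w := by gcongr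

lemma expect_sieveWeight_mul_le_prod (hs : ∀ p ∈ s, p.Prime) (hw : 0 < w)
    (hws : ∀ p ∈ s, w < (p : ℝ)) (hL : 4 * (L : ℝ) ≤ w) (h₁ : #T₁ ≤ L) (h₂ : #T₂ ≤ L) {c : ℕ → ℕ}
    (hc : ∀ p ∈ s, #T₁ + #T₂ ≤ residueCount p (T₁ ∪ T₂) + c p) :
    𝔼 b ∈ range (∏ p ∈ s, p), sieveWeight s T₁ b * sieveWeight s T₂ b ≤
      ∏ p ∈ s, (1 + 2 * c p / (p : ℝ)) := by
  have hR : ((#T₁ + #T₂ : ℕ) : ℝ) ≤ 2 * L := by exact_mod_cast (by omega : #T₁ + #T₂ ≤ 2 * L)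
  rw [expect_sieveWeight_mul hs, inv_mul_eq_div, div_le_iff₀' (pow_pos (sieveDensity_pos hs) _)]
  exact prod_one_sub_div_le_sieveDensity_pow_mul hw hws (by linarith)
    (fun p _ => (residueCount_le_card _ _).trans (card_union_le _ _)) (fun p _ => (c p).cast_nonneg)
    fun p hp => by exact_mod_cast hc p hp

lemma one_sub_le_expect_sieveWeight (hs : ∀ p ∈ s, p.Prime) (hw : 0 < w)
    (hws : ∀ p ∈ s, w < (p : ℝ)) (hL : 4 * (L : ℝ) ≤ w) (hT : #T ≤ L) :
    1 - 8 * L ^ 2 / w ≤ 𝔼 b ∈ range (∏ p ∈ s, p), sieveWeight s T b := by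
  simpa only [sieveWeight_empty, mul_one] using
    one_sub_le_expect_sieveWeight_mul hs hw hws hL hT (card_empty.trans_le L.zero_le)

variable {q : ℕ} {n n₁ n₂ : ℤ}

lemma expect_sieveWeight_le_one (hs : ∀ p ∈ s, p.Prime) (hw : 0 < w)
    (hws : ∀ p ∈ s, w < (p : ℝ)) (hL : 4 * (L : ℝ) ≤ w) (hq : ∀ p ∈ s, ¬ p ∣ q)
    (hT : T ⊆ progression L q n) : 𝔼 b ∈ range (∏ p ∈ s, p), sieveWeight s T b ≤ 1 := by
  have hbound := expect_sieveWeight_mul_le_prod hs hw hws hL (card_le_of_subset_progression hT)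
    (card_empty.trans_le L.zero_le) (c := 0) fun p hp => by
      rw [union_empty, residueCount_eq_card_of_subset_progression (hs p hp) (hq p hp) ?_ hT]
      · simp
      · exact_mod_cast (by linarith [hws p hp, L.cast_nonneg (α := ℝ)] : (L : ℝ) < p)
  simpa [sieveWeight_empty] using hbound

lemma expect_sieveWeight_mul_le_expect_divisorWeight {c : ℝ} (hs : ∀ p ∈ s, p.Prime) (hw : 0 < w)
    (hws : ∀ p ∈ s, w < (p : ℝ)) (hL : 4 * (L : ℝ) ≤ w) (hc : 0 ≤ c)
    (hLc : 6 * (L : ℝ) ^ 2 ≤ c * w) (hq : ∀ p ∈ s, ¬ p ∣ q)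
    (hT₁ : T₁ ⊆ progression L q n₁) (hT₂ : T₂ ⊆ progression L q n₂) :
    𝔼 b ∈ range (∏ p ∈ s, p), sieveWeight s T₁ b * sieveWeight s T₂ b ≤
      𝔼 k ∈ Icc (-(L : ℤ)) L, divisorWeight s (6 * L ^ 2 * Real.exp c) (n₁ - n₂ + q * k) := by
  refine (expect_sieveWeight_mul_le_prod hs hw hws hL (card_le_of_subset_progression hT₁)
    (card_le_of_subset_progression hT₂) fun p hp =>
      card_add_card_le_residueCount_add (hs p hp) (hq p hp) ?_ hT₁ hT₂).trans ?_
  · exact_mod_cast (by linarith [hws p hp, L.cast_nonneg (α := ℝ)] : (L : ℝ) < p)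
  · refine le_of_eq_of_le ?_ (prod_exists_dvd_le_expect_divisorWeight hw hws hc hLc
      fun k => n₁ - n₂ + q * k)
    rw [prod_filter]
    refine prod_congr rfl fun p _ => ?_
    split_ifs <;> simp

end SieveWeight

section Moments

variable {s : Finset ℕ} {L q : ℕ} {w : ℝ} {I : Finset ℤ} {T : ℤ → Finset ℤ}

lemma abs_expect_sum_sieveWeight_sub_card_le (hs : ∀ p ∈ s, p.Prime) (hw : 0 < w)
    (hws : ∀ p ∈ s, w < (p : ℝ)) (hL : 4 * (L : ℝ) ≤ w) (hq : ∀ p ∈ s, ¬ p ∣ q)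
    (I : Finset ℤ) (hT : ∀ n, T n ⊆ progression L q n) :
    |𝔼 b ∈ range (∏ p ∈ s, p), ∑ n ∈ I, sieveWeight s (T n) b - #I| ≤ 8 * L ^ 2 / w * #I := by
  rw [expect_sum_comm]
  have hlower := card_nsmul_le_sum I _ _ fun n _ =>
    one_sub_le_expect_sieveWeight hs hw hws hL (card_le_of_subset_progression (hT n))
  have hupper := sum_le_card_nsmul I _ _ fun n _ =>
    expect_sieveWeight_le_one hs hw hws hL hq (hT n)
  rw [nsmul_eq_mul] at hlower hupper
  have : 0 ≤ 8 * L ^ 2 / w * #I := by positivity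
  rw [abs_le]
  constructor <;> linarith

lemma card_filter_exists_add_mul_eq_zero_le (I : Finset ℤ) (L : ℕ) (n q : ℤ) :
    #{m ∈ I | ∃ k ∈ Icc (-(L : ℤ)) L, m - n + q * k = 0} ≤ 2 * L + 1 := by
  rw [← card_Icc_neg_natCast]
  refine (card_le_card fun m hm => ?_).trans (card_image_le (f := fun k : ℤ => n - q * k))
  obtain ⟨k, hk, hmk⟩ := (mem_filter.1 hm).2
  exact mem_image.2 ⟨k, hk, by linarith⟩

lemma sum_expect_divisorWeight_le {B : ℝ} {X : ℕ} {J : Finset ℤ} {f : ℤ → ℤ} (hw : 0 < w)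
    (hs : ∀ p ∈ s, p.Prime ∧ w < (p : ℝ)) (hB : 0 ≤ B) {K : Finset ℤ} (hK : K.Nonempty)
    (hf : ∀ n ∈ J, ∀ k ∈ K, n + f k ≠ 0 ∧ |n + f k| ≤ X) :
    ∑ n ∈ J, 𝔼 k ∈ K, divisorWeight s B (n + f k) ≤
      #J + 2 * X * (Real.exp (2 * B / w) - 1) := by
  rw [← expect_sum_comm]
  refine expect_le hK fun k hk => ?_
  have hshift := sum_divisorWeight_sub_one_le hw hs hB X (J := J.image (· + f k)) fun m hm => by
    obtain ⟨n, hn, rfl⟩ := mem_image.1 hm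
    exact hf n hn k hk
  rw [sum_image fun _ _ _ _ => add_right_cancel, sum_sub_distrib, sum_const, nsmul_one] at hshift
  linarith

lemma sum_expect_sieveWeight_mul_le {c : ℝ} {X : ℕ} {n₂ : ℤ} (hs : ∀ p ∈ s, p.Prime) (hw : 0 < w)
    (hws : ∀ p ∈ s, w < (p : ℝ)) (hL : 4 * (L : ℝ) ≤ w) (hc : 0 ≤ c)
    (hLc : 6 * (L : ℝ) ^ 2 ≤ c * w) (hq : ∀ p ∈ s, ¬ p ∣ q) (hT : ∀ n, T n ⊆ progression L q n)
    (hX : ∀ n₁ ∈ I, ∀ k ∈ Icc (-(L : ℤ)) L, |n₁ - n₂ + q * k| ≤ X) :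
    ∑ n₁ ∈ I, 𝔼 b ∈ range (∏ p ∈ s, p), sieveWeight s (T n₁) b * sieveWeight s (T n₂) b ≤
      #I + (2 * L + 1) * (sieveDensity s ^ (2 * L))⁻¹ +
        2 * X * (Real.exp (2 * (6 * L ^ 2 * Real.exp c) / w) - 1) := by
  set P : ℤ → Prop := fun n₁ => ∃ k ∈ Icc (-(L : ℤ)) L, n₁ - n₂ + q * k = 0 with hP
  have hcard (n : ℤ) : #(T n) ≤ L := card_le_of_subset_progression (hT n)
  have hcoincident : ∑ n₁ ∈ I with P n₁, 𝔼 b ∈ range (∏ p ∈ s, p),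
      sieveWeight s (T n₁) b * sieveWeight s (T n₂) b ≤
        (2 * L + 1) * (sieveDensity s ^ (2 * L))⁻¹ := by
    refine (sum_le_card_nsmul _ _ _ fun n₁ _ =>
      expect_sieveWeight_mul_le_inv_sieveDensity_pow hs (hcard n₁) (hcard n₂)).trans ?_
    rw [nsmul_eq_mul]
    refine mul_le_mul_of_nonneg_right ?_ (inv_nonneg.2 (pow_nonneg (sieveDensity_pos hs).le _))
    exact_mod_cast card_filter_exists_add_mul_eq_zero_le I L n₂ q
  have hdistinct : ∑ n₁ ∈ I with ¬ P n₁, 𝔼 b ∈ range (∏ p ∈ s, p),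
      sieveWeight s (T n₁) b * sieveWeight s (T n₂) b ≤
        #{n₁ ∈ I | ¬ P n₁} + 2 * X * (Real.exp (2 * (6 * L ^ 2 * Real.exp c) / w) - 1) := by
    refine (sum_le_sum fun n₁ _ => expect_sieveWeight_mul_le_expect_divisorWeight hs hw hws hL hc
      hLc hq (hT n₁) (hT n₂)).trans ?_
    simp only [sub_add_eq_add_sub, add_sub_assoc]
    refine sum_expect_divisorWeight_le hw (fun p hp => ⟨hs p hp, hws p hp⟩) (by positivity)
      ⟨0, by simp⟩ fun n₁ hn₁ k hk => ?_
    simp only [hP, mem_filter, not_exists, not_and] at hn₁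
    simpa only [sub_add_eq_add_sub, add_sub_assoc] using
      And.intro (hn₁.2 k hk) (hX n₁ hn₁.1 k hk)
  have hle : (#{n₁ ∈ I | ¬ P n₁} : ℝ) ≤ #I := by exact_mod_cast card_filter_le _ _
  rw [← sum_filter_add_sum_filter_not I P]
  linarith

lemma abs_expect_sum_sieveWeight_sq_sub_card_sq_le {c : ℝ} {X : ℕ} (hs : ∀ p ∈ s, p.Prime)
    (hw : 0 < w) (hws : ∀ p ∈ s, w < (p : ℝ)) (hL : 4 * (L : ℝ) ≤ w) (hc : 0 ≤ c)
    (hLc : 6 * (L : ℝ) ^ 2 ≤ c * w) (hq : ∀ p ∈ s, ¬ p ∣ q) (hT : ∀ n, T n ⊆ progression L q n)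
    (hX : ∀ n₁ ∈ I, ∀ n₂ ∈ I, ∀ k ∈ Icc (-(L : ℤ)) L, |n₁ - n₂ + q * k| ≤ X) :
    |𝔼 b ∈ range (∏ p ∈ s, p), (∑ n ∈ I, sieveWeight s (T n) b) ^ 2 - (#I : ℝ) ^ 2| ≤
      #I * (8 * L ^ 2 / w * #I + (2 * L + 1) * (sieveDensity s ^ (2 * L))⁻¹ +
        2 * X * (Real.exp (2 * (6 * L ^ 2 * Real.exp c) / w) - 1)) := by
  have hpos := sieveDensity_pos hs
  have hexp : 0 ≤ Real.exp (2 * (6 * L ^ 2 * Real.exp c) / w) - 1 :=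
    sub_nonneg.2 (Real.one_le_exp (by positivity))
  have hpairs : 𝔼 b ∈ range (∏ p ∈ s, p), (∑ n ∈ I, sieveWeight s (T n) b) ^ 2 =
      ∑ n₂ ∈ I, ∑ n₁ ∈ I, 𝔼 b ∈ range (∏ p ∈ s, p),
        sieveWeight s (T n₁) b * sieveWeight s (T n₂) b := by
    simp only [sq, sum_mul_sum, expect_sum_comm]
    exact Finset.sum_comm
  have hlower := card_nsmul_le_sum I _ _ fun n₂ _ => card_nsmul_le_sum I _ _ fun n₁ _ =>
    one_sub_le_expect_sieveWeight_mul hs hw hws hL (card_le_of_subset_progression (hT n₁))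
      (card_le_of_subset_progression (hT n₂))
  have hupper := sum_le_card_nsmul I _ _ fun n₂ hn₂ =>
    sum_expect_sieveWeight_mul_le hs hw hws hL hc hLc hq hT fun n₁ hn₁ => hX n₁ hn₁ n₂ hn₂
  rw [← hpairs] at hlower hupper
  simp only [nsmul_eq_mul] at hlower hupper
  rw [abs_le]
  constructor
  · have : 0 ≤ (#I : ℝ) * ((2 * L + 1) * (sieveDensity s ^ (2 * L))⁻¹ +
      2 * X * (Real.exp (2 * (6 * L ^ 2 * Real.exp c) / w) - 1)) := by positivity
    linarith
  · have : 0 ≤ (#I : ℝ) * (8 * L ^ 2 / w * #I) := by positivity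
    linarith

end Moments

section Transfer

variable {M z H : ℝ} {K q : ℕ}

lemma sieveWeight_congr {s : Finset ℕ} (T : Finset ℤ) {b b' : ℤ}
    (h : b ≡ b' [ZMOD (∏ p ∈ s, p : ℕ)]) : sieveWeight s T b = sieveWeight s T b' := by
  simp only [sieveWeight, isSifted_congr h]

lemma APset_congr (M H : ℝ) (K q : ℕ) (n : ℤ) {b b' : ℤ} (h : b ≡ b' [ZMOD PP (H ^ M)]) :
    APset M K b H q n = APset M K b' H q n :=
  filter_congr fun m _ => by rw [inS_iff_isSifted, inS_iff_isSifted, isSifted_congr h]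

lemma APset_subset_progression (M H : ℝ) (K q : ℕ) (b n : ℤ) :
    APset M K b H q n ⊆ progression ⌊(K : ℝ) * H⌋₊ q n :=
  filter_subset _ _

lemma lam_eq_sieveWeight (M z H : ℝ) (K q : ℕ) (b n : ℤ) :
    lam M z K b H q n = sieveWeight (primesBetween (H ^ M) z) (APset M K b H q n) b := by
  simp only [lam, sieveWeight, inSBetween_iff_isSifted, zpow_neg, zpow_natCast]
  rfl

lemma expect_sum_lam_pow (h : H ^ M ≤ z) (I : Finset ℤ) (j : ℕ) :
    𝔼 b ∈ range (PP z), (∑ n ∈ I, lam M z K b H q n) ^ j =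
      𝔼 a ∈ range (PP (H ^ M)), 𝔼 b ∈ range (∏ p ∈ primesBetween (H ^ M) z, p),
        (∑ n ∈ I, sieveWeight (primesBetween (H ^ M) z) (APset M K a H q n) b) ^ j := by
  have hne : ∏ p ∈ primesBetween (H ^ M) z, p ≠ 0 :=
    prod_ne_zero_iff.2 fun _ hp => (mem_primesBetween.1 hp).1.ne_zero
  simp only [PP_eq_mul_prod_primesBetween h, lam_eq_sieveWeight]
  refine expect_range_mul_of_coprime (PP_pos _).ne' hne (coprime_PP_prod_primesBetween _ _)
    (F := fun a b => (∑ n ∈ I, sieveWeight (primesBetween (H ^ M) z) (APset M K a H q n) b) ^ j)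
    fun ha hb => ?_
  simp only [APset_congr M H K q _ ha, sieveWeight_congr _ hb]

lemma abs_expect_sum_lam_pow_sub_le (h : H ^ M ≤ z) {I : Finset ℤ} {j : ℕ} {c ε : ℝ}
    (hfibre : ∀ a : ℤ, |𝔼 b ∈ range (∏ p ∈ primesBetween (H ^ M) z, p),
      (∑ n ∈ I, sieveWeight (primesBetween (H ^ M) z) (APset M K a H q n) b) ^ j - c| ≤ ε) :
    |𝔼 b ∈ range (PP z), (∑ n ∈ I, lam M z K b H q n) ^ j - c| ≤ ε := by
  rw [expect_sum_lam_pow h]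
  exact abs_expect_sub_le (nonempty_range_iff.2 (PP_pos _).ne') fun a _ => hfibre a

lemma prime_not_dvd_of_mem_primesBetween {w : ℝ} {p : ℕ} (hq : q.Prime) (hzq : z < q)
    (hp : p ∈ primesBetween w z) : ¬ p ∣ q := by
  obtain ⟨hprime, -, hpz⟩ := mem_primesBetween.1 hp
  rw [Nat.prime_dvd_prime_iff_eq hprime hq]
  rintro rfl
  exact hzq.not_ge hpz

end Transfer

section SingleModulus

variable {M z H : ℝ} {K q y : ℕ}

lemma rpow_eq_rpow_sub_two_mul_sq (hH : 0 < H) (M : ℝ) : H ^ M = H ^ (M - 2) * H ^ 2 := by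
  rw [← Real.rpow_natCast H 2, ← Real.rpow_add hH]
  norm_num

lemma floor_mul_sq_le (hH : 0 ≤ H) (K : ℕ) : (⌊K * H⌋₊ : ℝ) ^ 2 ≤ K ^ 2 * H ^ 2 := by
  rw [← mul_pow]
  exact pow_le_pow_left₀ (Nat.cast_nonneg _) (Nat.floor_le (by positivity)) 2

lemma floor_mul_sq_div_rpow_le (hH : 0 < H) (M : ℝ) (K : ℕ) :
    (⌊K * H⌋₊ : ℝ) ^ 2 / H ^ M ≤ K ^ 2 / H ^ (M - 2) := by
  rw [rpow_eq_rpow_sub_two_mul_sq hH, div_le_div_iff₀ (by positivity) (by positivity)]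
  have := mul_le_mul_of_nonneg_right (floor_mul_sq_le hH.le K) (Real.rpow_nonneg hH.le (M - 2))
  linarith

lemma sq_le_rpow (hH : 1 ≤ H) (hM : 2 ≤ M) : H ^ 2 ≤ H ^ M := by
  rw [← Real.rpow_two]
  exact Real.rpow_le_rpow_of_exponent_le hH hM

lemma four_mul_floor_mul_le_rpow (hH : 1 ≤ H) (hHK : 4 * (K : ℝ) ≤ H) (hM : 2 ≤ M) :
    4 * (⌊K * H⌋₊ : ℝ) ≤ H ^ M := by
  have hfloor : (⌊K * H⌋₊ : ℝ) ≤ K * H := Nat.floor_le (by positivity)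
  nlinarith [sq_le_rpow hH hM]

lemma card_Ioc_neg_mul (K y : ℕ) : (#(Ioc (-((K * y : ℕ) : ℤ)) (y : ℤ)) : ℝ) = (K + 1) * y := by
  rw [Int.card_Ioc, sub_neg_eq_add, ← Nat.cast_add, Int.toNat_natCast]
  push_cast
  ring

lemma abs_sub_add_mul_le (hH : 0 < H) (hqy : (q : ℝ) ≤ y / H) {n₁ n₂ k : ℤ}
    (hn₁ : n₁ ∈ Ioc (-((K * y : ℕ) : ℤ)) (y : ℤ)) (hn₂ : n₂ ∈ Ioc (-((K * y : ℕ) : ℤ)) (y : ℤ))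
    (hk : k ∈ Icc (-(⌊K * H⌋₊ : ℤ)) ⌊K * H⌋₊) :
    |n₁ - n₂ + q * k| ≤ (2 * ((K + 1) * y) : ℕ) := by
  have hqL : q * ⌊K * H⌋₊ ≤ K * y := by
    suffices (q : ℝ) * ⌊K * H⌋₊ ≤ K * y by exact_mod_cast this
    calc (q : ℝ) * ⌊K * H⌋₊ ≤ y / H * (K * H) := by gcongr; exact Nat.floor_le (by positivity)
      _ = K * y := by field_simp
  have hqk : |(q : ℤ) * k| ≤ (K * y : ℕ) := by
    rw [abs_mul, Nat.abs_cast]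
    refine (mul_le_mul_of_nonneg_left (abs_le.2 (mem_Icc.1 hk)) (Nat.cast_nonneg q)).trans ?_
    exact_mod_cast hqL
  rw [mem_Ioc] at hn₁ hn₂
  rw [abs_le] at hqk ⊢
  push_cast at *
  constructor <;> linarith

/-- The constant implied in the moment asymptotics, as a function of `κ = K ^ 2`. The three terms
come from the first moment, from coinciding progressions, and from the primes that divide a
difference between two distinct progressions. -/
noncomputable def momentConstant (κ : ℝ) : ℝ :=
  8 * κ + 1 + 4 * (12 * κ * Real.exp (6 * κ) * Real.exp (12 * κ * Real.exp (6 * κ)))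

lemma eight_mul_add_one_le_momentConstant {κ : ℝ} (hκ : 0 ≤ κ) :
    8 * κ + 1 ≤ momentConstant κ := by
  rw [momentConstant]
  exact le_add_of_nonneg_right (by positivity)

lemma exp_sub_one_le_div {v c κ : ℝ} (hv : 1 ≤ v) (hκ : 0 ≤ κ) (h0 : 0 ≤ c) (hc : c ≤ κ / v) :
    Real.exp c - 1 ≤ κ * Real.exp κ / v := by
  have h := exp_le_one_add_mul_exp h0 (hc.trans (div_le_self hκ hv))
  have := mul_le_mul_of_nonneg_right hc (Real.exp_pos κ).le
  rw [div_mul_eq_mul_div] at this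
  linarith

lemma exp_floor_mul_sq_sub_one_le (hM : 2 ≤ M) (hH : 1 ≤ H) (K : ℕ) :
    Real.exp (2 * (6 * ⌊K * H⌋₊ ^ 2 * Real.exp (6 * K ^ 2)) / H ^ M) - 1 ≤
      12 * K ^ 2 * Real.exp (6 * K ^ 2) * Real.exp (12 * K ^ 2 * Real.exp (6 * K ^ 2)) /
        H ^ (M - 2) := by
  refine exp_sub_one_le_div (Real.one_le_rpow hH (by linarith)) (by positivity) (by positivity) ?_
  have hratio := floor_mul_sq_div_rpow_le (zero_lt_one.trans_le hH) M K
  calc _ = 12 * Real.exp (6 * K ^ 2) * (⌊K * H⌋₊ ^ 2 / H ^ M) := by ring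
    _ ≤ 12 * Real.exp (6 * K ^ 2) * (K ^ 2 / H ^ (M - 2)) := by gcongr
    _ = _ := by ring

lemma abs_expect_sum_lam_sub_le (hM : 2 ≤ M) (hH : 1 ≤ H) (hHK : 4 * (K : ℝ) ≤ H)
    (hHz : H ^ M ≤ z) (hq : q.Prime) (hzq : z < q) :
    |𝔼 b ∈ range (PP z), (∑ n ∈ Ioc (-((K * y : ℕ) : ℤ)) (y : ℤ), lam M z K b H q n) ^ 1 -
        ((K + 1) * y) ^ 1| ≤ 8 * K ^ 2 * ((K + 1) * y) / H ^ (M - 2) := by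
  refine abs_expect_sum_lam_pow_sub_le hHz fun a => ?_
  simp only [pow_one]
  have hmoment := abs_expect_sum_sieveWeight_sub_card_le
    (fun p hp => (mem_primesBetween.1 hp).1) (by positivity)
    (fun p hp => (mem_primesBetween.1 hp).2.1) (four_mul_floor_mul_le_rpow hH hHK hM)
    (fun p hp => prime_not_dvd_of_mem_primesBetween hq hzq hp)
    (Ioc (-((K * y : ℕ) : ℤ)) (y : ℤ)) (APset_subset_progression M H K q a)
  rw [card_Ioc_neg_mul] at hmoment
  refine hmoment.trans ?_
  rw [mul_div_right_comm (8 * (K : ℝ) ^ 2), mul_div_assoc, mul_div_assoc]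
  gcongr ?_ * _
  gcongr 8 * ?_
  exact floor_mul_sq_div_rpow_le (by positivity) M K

lemma abs_expect_sum_lam_sq_sub_le (hM : 2 ≤ M) (hH : 1 ≤ H) (hHK : 4 * (K : ℝ) ≤ H)
    (hHz : H ^ M ≤ z) (hq : q.Prime) (hzq : z < q) (hqy : (q : ℝ) ≤ y / H)
    (hdiag : (2 * ⌊K * H⌋₊ + 1) * (sigBetween (H ^ M) z ^ (2 * ⌊K * H⌋₊))⁻¹ ≤
      y / H ^ (M - 2)) :
    |𝔼 b ∈ range (PP z), (∑ n ∈ Ioc (-((K * y : ℕ) : ℤ)) (y : ℤ), lam M z K b H q n) ^ 2 -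
        ((K + 1) * y) ^ 2| ≤ momentConstant (K ^ 2) * ((K + 1) * y) ^ 2 / H ^ (M - 2) := by
  refine abs_expect_sum_lam_pow_sub_le hHz fun a => ?_
  have hH0 : 0 < H := by positivity
  have hc : 6 * (⌊K * H⌋₊ : ℝ) ^ 2 ≤ 6 * K ^ 2 * H ^ M := by
    have := mul_le_mul_of_nonneg_left (sq_le_rpow hH hM) (sq_nonneg (K : ℝ))
    linarith [floor_mul_sq_le hH0.le K]
  have hmoment := abs_expect_sum_sieveWeight_sq_sub_card_sq_le
    (fun p hp => (mem_primesBetween.1 hp).1) (by positivity)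
    (fun p hp => (mem_primesBetween.1 hp).2.1) (four_mul_floor_mul_le_rpow hH hHK hM)
    (by positivity) hc (fun p hp => prime_not_dvd_of_mem_primesBetween hq hzq hp)
    (APset_subset_progression M H K q a)
    fun n₁ hn₁ n₂ hn₂ k hk => abs_sub_add_mul_le hH0 hqy hn₁ hn₂ hk
  rw [card_Ioc_neg_mul] at hmoment
  refine hmoment.trans ?_
  have hratio := floor_mul_sq_div_rpow_le hH0 M K
  have hexp := exp_floor_mul_sq_sub_one_le hM hH K
  calc _ ≤ (K + 1) * (y : ℝ) * (8 * (K ^ 2 / H ^ (M - 2)) * ((K + 1) * y) +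
        (K + 1) * y / H ^ (M - 2) + 2 * (2 * ((K + 1) * y) : ℕ) * (12 * K ^ 2 *
          Real.exp (6 * K ^ 2) * Real.exp (12 * K ^ 2 * Real.exp (6 * K ^ 2)) / H ^ (M - 2))) := by
        rw [mul_div_assoc 8]
        gcongr
        refine hdiag.trans ?_
        gcongr
        exact le_mul_of_one_le_left (Nat.cast_nonneg y) (by simp)
    _ = _ := by
        rw [momentConstant]
        push_cast
        ring

lemma abs_expect_sum_lam_pow_sub_pow_le (hM : 2 ≤ M) (hH : 1 ≤ H) (hHK : 4 * (K : ℝ) ≤ H)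
    (hHz : H ^ M ≤ z) (hq : q.Prime) (hzq : z < q) (hqy : (q : ℝ) ≤ y / H)
    (hdiag : (2 * ⌊K * H⌋₊ + 1) * (sigBetween (H ^ M) z ^ (2 * ⌊K * H⌋₊))⁻¹ ≤
      y / H ^ (M - 2)) {j : ℕ} (hj : j ∈ ({1, 2} : Set ℕ)) :
    |𝔼 b ∈ range (PP z), (∑ n ∈ Ioc (-((K * y : ℕ) : ℤ)) (y : ℤ), lam M z K b H q n) ^ j -
        ((K + 1) * y) ^ j| ≤ momentConstant (K ^ 2) * ((K + 1) * y) ^ j / H ^ (M - 2) := by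
  obtain rfl | rfl := hj
  · refine (abs_expect_sum_lam_sub_le hM hH hHK hHz hq hzq).trans ?_
    rw [pow_one]
    gcongr
    linarith [eight_mul_add_one_le_momentConstant (sq_nonneg (K : ℝ))]
  · exact abs_expect_sum_lam_sq_sub_le hM hH hHK hHz hq hzq hqy hdiag

end SingleModulus

section Mertens

lemma lt_of_mem_primesLE_sdiff {m n p : ℕ} (hp : p ∈ Nat.primesLE m \ Nat.primesLE n) : n < p := by
  obtain ⟨hm, hn⟩ := Finset.mem_sdiff.1 hp
  exact not_le.1 fun h => hn (Nat.mem_primesLE.2 ⟨h, Nat.prime_of_mem_primesLE hm⟩)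

lemma pow_card_primesLE_sdiff_le (n : ℕ) :
    n ^ #(Nat.primesLE (2 * n) \ Nat.primesLE n) ≤ 4 ^ (2 * n) :=
  calc n ^ #(Nat.primesLE (2 * n) \ Nat.primesLE n)
      ≤ ∏ p ∈ Nat.primesLE (2 * n) \ Nat.primesLE n, p :=
        Finset.pow_card_le_prod _ _ _ fun _ hp =>
          (lt_of_mem_primesLE_sdiff hp).le
    _ ≤ primorial (2 * n) :=
        prod_le_prod_of_subset_of_one_le' sdiff_subset fun _ hp _ =>
          (Nat.prime_of_mem_primesLE hp).one_le
    _ ≤ 4 ^ (2 * n) := primorial_le_four_pow _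

lemma mul_card_primesLE_two_pow_sdiff_le (k : ℕ) :
    k * #(Nat.primesLE (2 ^ (k + 1)) \ Nat.primesLE (2 ^ k)) ≤ 4 * 2 ^ k := by
  have h := pow_card_primesLE_sdiff_le (2 ^ k)
  rw [← pow_succ', ← pow_mul, show 4 = 2 ^ 2 by rfl, ← pow_mul] at h
  have := (Nat.pow_le_pow_iff_right one_lt_two).1 h
  rw [pow_succ 2 k] at this ⊢
  linarith

lemma sum_one_div_primesLE_two_pow_sdiff_le {k : ℕ} (hk : k ≠ 0) :
    ∑ p ∈ Nat.primesLE (2 ^ (k + 1)) \ Nat.primesLE (2 ^ k), 1 / (p : ℝ) ≤ 4 / k := by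
  have hcard : (k * #(Nat.primesLE (2 ^ (k + 1)) \ Nat.primesLE (2 ^ k)) : ℝ) ≤ 4 * 2 ^ k := by
    exact_mod_cast mul_card_primesLE_two_pow_sdiff_le k
  calc ∑ p ∈ Nat.primesLE (2 ^ (k + 1)) \ Nat.primesLE (2 ^ k), 1 / (p : ℝ)
      ≤ ∑ p ∈ Nat.primesLE (2 ^ (k + 1)) \ Nat.primesLE (2 ^ k), 1 / (2 : ℝ) ^ k :=
        sum_le_sum fun p hp => one_div_le_one_div_of_le (by positivity) <| by
          exact_mod_cast (lt_of_mem_primesLE_sdiff hp).le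
    _ = #(Nat.primesLE (2 ^ (k + 1)) \ Nat.primesLE (2 ^ k)) / 2 ^ k := by
        rw [sum_const, nsmul_eq_mul, mul_one_div]
    _ ≤ 4 / k := by
        rw [div_le_div_iff₀ (by positivity) (by positivity)]
        linarith

lemma sum_one_div_primesLE_two_pow_le (k : ℕ) :
    ∑ p ∈ Nat.primesLE (2 ^ (k + 1)), 1 / (p : ℝ) ≤ 1 + 4 * (harmonic k : ℝ) := by
  induction k with
  | zero =>
    have : Nat.primesLE (2 ^ (0 + 1)) = {2} := by decide
    rw [this]
    norm_num
  | succ k ih =>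
    rw [← sum_sdiff (Nat.primesLE_mono (Nat.pow_le_pow_right two_pos (k + 1).le_succ)),
      harmonic_succ]
    have := sum_one_div_primesLE_two_pow_sdiff_le k.succ_ne_zero
    push_cast at this ⊢
    rw [div_eq_mul_inv] at this
    linarith

lemma sum_one_div_le_of_forall_prime_le {s : Finset ℕ} {n : ℕ} (hn : 2 ≤ n)
    (hs : ∀ p ∈ s, p.Prime ∧ p ≤ n) :
    ∑ p ∈ s, 1 / (p : ℝ) ≤ 5 + 4 * Real.log (2 * Real.log n) := by
  have hsub : s ⊆ Nat.primesLE (2 ^ (Nat.log 2 n + 1)) := fun p hp => Nat.mem_primesLE.2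
    ⟨(hs p hp).2.trans (Nat.lt_pow_succ_log_self one_lt_two n).le, (hs p hp).1⟩
  have hk : 0 < Nat.log 2 n := Nat.log_pos one_lt_two hn
  have hklog : (Nat.log 2 n : ℝ) ≤ 2 * Real.log n := by
    have hpow : ((2 ^ Nat.log 2 n : ℕ) : ℝ) ≤ n := by
      exact_mod_cast Nat.pow_log_le_self 2 (by omega)
    have h := Real.log_le_log (by positivity) hpow
    rw [Nat.cast_pow, Real.log_pow, Nat.cast_ofNat] at h
    nlinarith [Real.log_two_gt_d9, Nat.cast_nonneg (α := ℝ) (Nat.log 2 n)]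
  have hmono := Real.log_le_log (by positivity) hklog
  calc ∑ p ∈ s, 1 / (p : ℝ)
      ≤ ∑ p ∈ Nat.primesLE (2 ^ (Nat.log 2 n + 1)), 1 / (p : ℝ) :=
        sum_le_sum_of_subset_of_nonneg hsub fun _ _ _ => by positivity
    _ ≤ 1 + 4 * (harmonic (Nat.log 2 n) : ℝ) := sum_one_div_primesLE_two_pow_le _
    _ ≤ 5 + 4 * Real.log (2 * Real.log n) := by
        linarith [harmonic_le_one_add_log (Nat.log 2 n)]

lemma inv_one_sub_le_exp_two_mul {t : ℝ} (h0 : 0 ≤ t) (h1 : t ≤ 1 / 2) :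
    (1 - t)⁻¹ ≤ Real.exp (2 * t) := by
  refine inv_le_of_inv_le₀ (Real.exp_pos _) ?_
  rw [← Real.exp_neg]
  refine (Real.exp_le_exp.2 ?_).trans (exp_neg_sub_sq_le_one_sub h0 h1)
  nlinarith

lemma inv_sieveDensity_le {s : Finset ℕ} {n : ℕ} (hn : 2 ≤ n) (hs : ∀ p ∈ s, p.Prime ∧ p ≤ n) :
    (sieveDensity s)⁻¹ ≤ Real.exp 10 * (2 * Real.log n) ^ 8 := by
  have hlog : 0 < 2 * Real.log n := mul_pos two_pos (Real.log_pos (by exact_mod_cast hn))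
  calc (sieveDensity s)⁻¹ = ∏ p ∈ s, (1 - 1 / (p : ℝ))⁻¹ := by rw [sieveDensity, prod_inv_distrib]
    _ ≤ ∏ p ∈ s, Real.exp (2 * (1 / (p : ℝ))) := by
        refine prod_le_prod (fun p _ => inv_nonneg.2 (sub_nonneg.2 (one_div_natCast_le_one p)))
          fun p hp => inv_one_sub_le_exp_two_mul (by positivity) ?_
        exact one_div_le_one_div_of_le two_pos (by exact_mod_cast (hs p hp).1.two_le)
    _ = Real.exp (2 * ∑ p ∈ s, 1 / (p : ℝ)) := by rw [← Real.exp_sum, ← mul_sum]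
    _ ≤ Real.exp (10 + (8 : ℕ) * Real.log (2 * Real.log n)) := by
        refine Real.exp_le_exp.2 ?_
        push_cast
        linarith [sum_one_div_le_of_forall_prime_le hn hs]
    _ = Real.exp 10 * (2 * Real.log n) ^ 8 := by
        rw [Real.exp_add, Real.exp_nat_mul, Real.exp_log hlog]

end Mertens

section Asymptotics

variable {δ : ℝ}

lemma mul_rpow_log_le_yy (δ x : ℝ) : x * Real.log x ^ δ ≤ yy δ x := Nat.le_ceil _

lemma tendsto_yy_div_atTop (hδ : 0 < δ) : Tendsto (fun x => (yy δ x : ℝ) / x) atTop atTop := by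
  refine tendsto_atTop_mono' _ ?_ ((tendsto_rpow_atTop hδ).comp Real.tendsto_log_atTop)
  filter_upwards [eventually_gt_atTop 0] with x hx
  exact (le_div_iff₀' hx).2 (mul_rpow_log_le_yy δ x)

lemma eventually_le_yy (hδ : 0 < δ) : ∀ᶠ x in atTop, x ≤ yy δ x := by
  filter_upwards [(tendsto_yy_div_atTop hδ).eventually_ge_atTop 1, eventually_gt_atTop 0]
    with x hratio hx
  exact (one_le_div hx).1 hratio

lemma eventually_yy_le_sq (δ : ℝ) : ∀ᶠ x in atTop, (yy δ x : ℝ) ≤ x ^ 2 := by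
  filter_upwards [(isLittleO_log_rpow_rpow_atTop δ one_pos).bound (one_half_pos (α := ℝ)),
    eventually_ge_atTop 2, Real.tendsto_log_atTop.eventually_ge_atTop 0] with x hx hx2 hlog
  have hpow : 0 ≤ Real.log x ^ δ := Real.rpow_nonneg hlog δ
  rw [Real.rpow_one, Real.norm_of_nonneg hpow, Real.norm_of_nonneg (by linarith)] at hx
  have hceil : (yy δ x : ℝ) < x * Real.log x ^ δ + 1 := Nat.ceil_lt_add_one (by positivity)
  nlinarith

lemma eventually_log_log_sq_le :
    ∀ᶠ x in atTop, Real.log (Real.log x) ^ 2 ≤ Real.log x ^ (1 / 2 : ℝ) := by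
  have h := (isLittleO_log_rpow_rpow_atTop 2 (one_half_pos (α := ℝ))).bound one_pos
  filter_upwards [Real.tendsto_log_atTop.eventually h,
    Real.tendsto_log_atTop.eventually_ge_atTop 0] with x hx hlog
  rw [one_mul, Real.norm_of_nonneg (Real.rpow_nonneg hlog _), Real.rpow_two] at hx
  exact (le_abs_self _).trans hx

lemma eventually_zz_le_sq (δ : ℝ) : ∀ᶠ x in atTop, zz δ x ≤ x ^ 2 := by
  filter_upwards [eventually_yy_le_sq δ, eventually_log_log_sq_le,
    Real.tendsto_log_atTop.eventually_gt_atTop 0] with x hyy hloglog hlog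
  refine le_trans ?_ hyy
  rw [zz, div_le_iff₀ (by positivity)]
  gcongr

lemma eventually_mul_rpow_mul_exp_rpow_half_le_exp {A : ℝ} (hA : 0 < A) (B C : ℝ) :
    ∀ᶠ t in atTop, A * t ^ B * Real.exp (C * t ^ (1 / 2 : ℝ)) ≤ Real.exp t := by
  filter_upwards [eventually_gt_atTop 0, eventually_ge_atTop (3 * Real.log A),
    (Real.isLittleO_log_id_atTop.const_mul_left B).bound (one_div_pos.2 (zero_lt_three (α := ℝ))),
    (tendsto_rpow_atTop one_half_pos).eventually_ge_atTop (3 * C)] with t ht hconst hlog hsqrt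
  rw [id, Real.norm_of_nonneg ht.le] at hlog
  have hself : t ^ (1 / 2 : ℝ) * t ^ (1 / 2 : ℝ) = t := by
    rw [← Real.rpow_add ht]
    norm_num
  have hroot := mul_le_mul_of_nonneg_right hsqrt (Real.rpow_nonneg ht.le (1 / 2))
  calc A * t ^ B * Real.exp (C * t ^ (1 / 2 : ℝ))
      = Real.exp (Real.log A + B * Real.log t + C * t ^ (1 / 2 : ℝ)) := by
        rw [Real.exp_add, Real.exp_add, Real.exp_log hA, Real.rpow_def_of_pos ht, mul_comm B]
    _ ≤ Real.exp t := Real.exp_le_exp.2 (by linarith [(le_abs_self _).trans hlog])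

lemma eventually_mul_rpow_log_mul_exp_le {A : ℝ} (hA : 0 < A) (B C : ℝ) :
    ∀ᶠ x in atTop, A * Real.log x ^ B * Real.exp (C * Real.log x ^ (1 / 2 : ℝ)) ≤ x := by
  filter_upwards [Real.tendsto_log_atTop.eventually
    (eventually_mul_rpow_mul_exp_rpow_half_le_exp hA B C), eventually_gt_atTop 0] with x hx hx0
  rwa [Real.exp_log hx0] at hx

lemma mul_log_log_sq_le_of_mul_zz_le {x H : ℝ} (hlog : 0 < Real.log x) (hy : 0 < yy δ x)
    (hH : H * zz δ x ≤ yy δ x) : H * Real.log (Real.log x) ^ 2 ≤ Real.log x ^ (1 / 2 : ℝ) := by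
  have hy' : (0 : ℝ) < yy δ x := Nat.cast_pos.2 hy
  rw [zz, ← mul_div_assoc, div_le_iff₀ (by positivity)] at hH
  exact le_of_mul_le_mul_left (by linarith) hy'

lemma rpow_le_rpow_half {a b M : ℝ} (ha : 0 ≤ a) (hb : 0 ≤ b) (hM : 0 ≤ M)
    (h : a ≤ b ^ (1 / 2 : ℝ)) : a ^ M ≤ b ^ (M / 2) := by
  refine (Real.rpow_le_rpow ha h hM).trans_eq ?_
  rw [← Real.rpow_mul hb, one_div_mul_eq_div]

lemma eventually_forall_mul_log_log_le (hδ : 0 < δ) :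
    ∀ᶠ x in atTop, ∀ H, 0 ≤ H → H * zz δ x ≤ yy δ x →
      H ≤ Real.log x ^ (1 / 2 : ℝ) ∧ H * Real.log (Real.log x) ≤ Real.log x ^ (1 / 2 : ℝ) := by
  filter_upwards [eventually_le_yy hδ, eventually_gt_atTop 0,
    Real.tendsto_log_atTop.eventually_gt_atTop 0,
    (Real.tendsto_log_atTop.comp Real.tendsto_log_atTop).eventually_ge_atTop 1]
    with x hyy hx hlog hloglog H hH hHz
  have hy : 0 < yy δ x := Nat.cast_pos.1 (hx.trans_le hyy)
  have hle := mul_log_log_sq_le_of_mul_zz_le hlog hy hHz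
  have hlog_le_sq := le_self_pow₀ hloglog two_ne_zero
  constructor
  · exact (le_mul_of_one_le_right hH (hloglog.trans hlog_le_sq)).trans hle
  · exact (mul_le_mul_of_nonneg_left hlog_le_sq hH).trans hle

lemma eventually_forall_rpow_le_zz {M : ℝ} (hδ : 0 < δ) (hM : 0 ≤ M) :
    ∀ᶠ x in atTop, ∀ H, 0 ≤ H → H * zz δ x ≤ yy δ x → H ^ M ≤ zz δ x := by
  filter_upwards [eventually_forall_mul_log_log_le hδ, eventually_le_yy hδ,
    eventually_mul_rpow_log_mul_exp_le one_pos (M / 2 + 1 / 2) 0,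
    Real.tendsto_log_atTop.eventually_gt_atTop 0,
    (Real.tendsto_log_atTop.comp Real.tendsto_log_atTop).eventually_ge_atTop 1]
    with x hHle hyy hgrowth hlog hloglog H hH hHz
  rw [one_mul, zero_mul, Real.exp_zero, mul_one, Real.rpow_add hlog] at hgrowth
  refine (rpow_le_rpow_half hH hlog.le hM (hHle H hH hHz).1).trans ?_
  rw [zz, le_div_iff₀ (by positivity)]
  exact (hgrowth.trans hyy).trans (le_mul_of_one_le_right (Nat.cast_nonneg _) (one_le_pow₀ hloglog))

lemma eventually_forall_inv_sigBetween_le (δ : ℝ) :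
    ∀ᶠ x in atTop, ∀ w, (sigBetween w (zz δ x))⁻¹ ≤ Real.log x ^ 9 := by
  filter_upwards [eventually_zz_le_sq δ, eventually_ge_atTop 2,
    Real.tendsto_log_atTop.eventually_ge_atTop (Real.exp 10 * 4 ^ 8)] with x hzz hx hlog w
  have : 0 ≤ Real.log x := (by positivity : 0 ≤ Real.exp 10 * 4 ^ 8).trans hlog
  have hfloor : 2 ≤ ⌊x ^ 2⌋₊ := Nat.le_floor (by push_cast; nlinarith)
  have hlogfloor : Real.log ⌊x ^ 2⌋₊ ≤ 2 * Real.log x := by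
    have := Real.log_le_log (by positivity) (Nat.floor_le (sq_nonneg x))
    rwa [Real.log_pow] at this
  have hprimes : ∀ p ∈ primesBetween w (zz δ x), p.Prime ∧ p ≤ ⌊x ^ 2⌋₊ := fun p hp =>
    ⟨(mem_primesBetween.1 hp).1, Nat.le_floor ((mem_primesBetween.1 hp).2.2.trans hzz)⟩
  calc (sigBetween w (zz δ x))⁻¹
      ≤ Real.exp 10 * (2 * Real.log ⌊x ^ 2⌋₊) ^ 8 := inv_sieveDensity_le hfloor hprimes
    _ ≤ Real.exp 10 * (2 * (2 * Real.log x)) ^ 8 := by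
        have := Real.log_natCast_nonneg ⌊x ^ 2⌋₊
        gcongr
    _ = Real.exp 10 * 4 ^ 8 * Real.log x ^ 8 := by ring
    _ ≤ Real.log x * Real.log x ^ 8 := by gcongr
    _ = Real.log x ^ 9 := by ring

lemma floor_mul_add_one_mul_rpow_le {M H : ℝ} (hH : 1 ≤ H) (K : ℕ) :
    (2 * ⌊K * H⌋₊ + 1) * H ^ (M - 2) ≤ (2 * K + 1) * H ^ M := by
  have hH0 : 0 ≤ H := zero_le_one.trans hH
  have hfloor : (⌊K * H⌋₊ : ℝ) ≤ K * H := Nat.floor_le (by positivity)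
  calc (2 * ⌊K * H⌋₊ + 1) * H ^ (M - 2)
      ≤ ((2 * K + 1) * H ^ 2) * H ^ (M - 2) := by
        gcongr
        nlinarith [mul_nonneg (Nat.cast_nonneg (α := ℝ) K) hH0]
    _ = (2 * K + 1) * H ^ M := by
        rw [rpow_eq_rpow_sub_two_mul_sq (by linarith) M]
        ring

lemma sigBetween_pos (w t : ℝ) : 0 < sigBetween w t :=
  sieveDensity_pos fun _ hp => (mem_primesBetween.1 hp).1

lemma inv_sigBetween_pow_le {w x z H : ℝ} {K : ℕ} (hH : 0 ≤ H) (hlog : 1 ≤ Real.log x)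
    (hσ : (sigBetween w z)⁻¹ ≤ Real.log x ^ 9)
    (hHx : H * Real.log (Real.log x) ≤ Real.log x ^ (1 / 2 : ℝ)) :
    (sigBetween w z ^ (2 * ⌊K * H⌋₊))⁻¹ ≤ Real.exp (18 * K * Real.log x ^ (1 / 2 : ℝ)) := by
  have := sigBetween_pos w z
  have hfloor : (⌊K * H⌋₊ : ℝ) ≤ K * H := Nat.floor_le (by positivity)
  calc (sigBetween w z ^ (2 * ⌊K * H⌋₊))⁻¹ = (sigBetween w z)⁻¹ ^ (2 * ⌊K * H⌋₊) :=
        (inv_pow _ _).symm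
    _ ≤ (Real.log x ^ 9) ^ (2 * ⌊K * H⌋₊) := by gcongr
    _ = Real.exp ((18 * ⌊K * H⌋₊ : ℕ) * Real.log (Real.log x)) := by
        rw [Real.exp_nat_mul, Real.exp_log (by linarith), ← pow_mul, ← mul_assoc]
        norm_num
    _ ≤ Real.exp (18 * K * Real.log x ^ (1 / 2 : ℝ)) := by
        refine Real.exp_le_exp.2 ?_
        push_cast
        calc 18 * ⌊K * H⌋₊ * Real.log (Real.log x) ≤ 18 * (K * H) * Real.log (Real.log x) := by
              have := Real.log_nonneg hlog
              gcongr
          _ = 18 * K * (H * Real.log (Real.log x)) := by ring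
          _ ≤ _ := by gcongr

lemma eventually_forall_mul_inv_sigBetween_pow_le {M : ℝ} (hδ : 0 < δ) (hM : 0 ≤ M) (K : ℕ) :
    ∀ᶠ x in atTop, ∀ H, 1 ≤ H → H * zz δ x ≤ yy δ x → ∀ w,
      (2 * ⌊K * H⌋₊ + 1) * (sigBetween w (zz δ x) ^ (2 * ⌊K * H⌋₊))⁻¹ ≤
        yy δ x / H ^ (M - 2) := by
  filter_upwards [eventually_forall_mul_log_log_le hδ, eventually_le_yy hδ,
    eventually_mul_rpow_log_mul_exp_le (by positivity : (0 : ℝ) < 2 * K + 1) (M / 2) (18 * K),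
    Real.tendsto_log_atTop.eventually_ge_atTop 1, eventually_forall_inv_sigBetween_le δ]
    with x hHle hyy hgrowth hlog hσ H hH hHz w
  have hH0 : 0 ≤ H := zero_le_one.trans hH
  obtain ⟨hHsqrt, hHlog⟩ := hHle H hH0 hHz
  rw [le_div_iff₀ (by positivity), mul_right_comm]
  calc (2 * ⌊K * H⌋₊ + 1) * H ^ (M - 2) * (sigBetween w (zz δ x) ^ (2 * ⌊K * H⌋₊))⁻¹
      ≤ (2 * K + 1) * H ^ M * Real.exp (18 * K * Real.log x ^ (1 / 2 : ℝ)) :=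
        mul_le_mul (floor_mul_add_one_mul_rpow_le hH K)
          (inv_sigBetween_pow_le hH0 hlog (hσ w) hHlog)
          (inv_nonneg.2 (pow_nonneg (sigBetween_pos w _).le _)) (by positivity)
    _ ≤ (2 * K + 1) * Real.log x ^ (M / 2) * Real.exp (18 * K * Real.log x ^ (1 / 2 : ℝ)) := by
        gcongr
        exact rpow_le_rpow_half hH0 (by linarith) hM hHsqrt
    _ ≤ yy δ x := hgrowth.trans hyy

end Asymptotics

section MainTheorem

variable {δ M : ℝ}

lemma eventually_abs_expect_sum_lam_pow_sub_le (hδ : 0 < δ) (hM : 2 ≤ M) (K : ℕ) :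
    ∀ᶠ x in atTop, ∀ H, 2 * yy δ x / x ≤ H → ∀ q : ℕ, q.Prime → zz δ x < q →
      (q : ℝ) ≤ yy δ x / H → ∀ j ∈ ({1, 2} : Set ℕ),
        |𝔼 b ∈ range (PP (zz δ x)), (∑ n ∈ Ioc (-((K * yy δ x : ℕ) : ℤ)) (yy δ x : ℤ),
            lam M (zz δ x) K b H q n) ^ j - ((K + 1) * yy δ x) ^ j| ≤
          momentConstant (K ^ 2) * ((K + 1) * yy δ x) ^ j / H ^ (M - 2) := by
  have hM0 : 0 ≤ M := zero_le_two.trans hM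
  filter_upwards [(tendsto_yy_div_atTop hδ).eventually_ge_atTop (2 * K + 1),
    eventually_forall_rpow_le_zz hδ hM0, eventually_forall_mul_inv_sigBetween_pow_le hδ hM0 K]
    with x hratio hrpow hdiag H hH q hq hzq hqy j hj
  rw [mul_div_assoc] at hH
  have : (0 : ℝ) ≤ K := K.cast_nonneg
  have hH1 : 1 ≤ H := by linarith
  have hHz : H * zz δ x ≤ yy δ x :=
    (mul_le_mul_of_nonneg_left hzq.le (by linarith)).trans
      ((le_div_iff₀' (by linarith)).1 hqy)
  exact abs_expect_sum_lam_pow_sub_pow_le hM hH1 (by linarith) (hrpow H (by linarith) hHz) hq hzq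
    hqy (hdiag H hH1 hHz _) hj

lemma prime_of_mem_QH {ξ x H : ℝ} (hξ : 0 < ξ) (hH : H ∈ frakH δ ξ x) {q : ℕ}
    (hq : q ∈ QH δ ξ x H) : q.Prime ∧ zz δ x < q ∧ (q : ℝ) ≤ yy δ x / H := by
  obtain ⟨k, hpow, -, hle⟩ := hH
  have hHpos : 0 < H := hpow ▸ pow_pos hξ k
  obtain ⟨-, hprime, hlower, hupper⟩ := mem_filter.1 hq
  refine ⟨hprime, ?_, hupper⟩
  rcases le_or_gt (zz δ x) 0 with hz | hz
  · exact hz.trans_lt (Nat.cast_pos.2 hprime.pos)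
  · refine lt_of_le_of_lt ?_ hlower
    rw [le_div_iff₀ (by positivity)] at hle ⊢
    linarith

theorem stmt3_general (hδ : 0 < δ) (hM : 2 ≤ M) (K : ℕ) :
    ∃ C : ℝ, 0 < C ∧ ∃ x₀ : ℝ, ∀ x ≥ x₀, ∀ H, 2 * (yy δ x : ℝ) / x ≤ H →
      ∀ Q : Finset ℕ, (∀ q ∈ Q, q.Prime ∧ zz δ x < q ∧ (q : ℝ) ≤ yy δ x / H) →
        ∀ j ∈ ({1, 2} : Set ℕ),
          |EE δ x (fun b => ∑ q ∈ Q, (∑ n ∈ Ioc (-((K * yy δ x : ℕ) : ℤ)) (yy δ x : ℤ),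
              lam M (zz δ x) K b H q n) ^ j) - (((K : ℝ) + 1) * yy δ x) ^ j * #Q| ≤
            C * (((K : ℝ) + 1) * yy δ x) ^ j * #Q / H ^ (M - 2) := by
  have hC : 0 < momentConstant (K ^ 2) := by
    linarith [eight_mul_add_one_le_momentConstant (sq_nonneg (K : ℝ)), sq_nonneg (K : ℝ)]
  obtain ⟨x₀, hx₀⟩ :=
    eventually_atTop.1 (eventually_abs_expect_sum_lam_pow_sub_le hδ hM K)
  refine ⟨_, hC, x₀, fun x hx H hH Q hQ j hj => ?_⟩
  rw [EE_eq_expect, expect_sum_comm, mul_comm (_ ^ j), ← nsmul_eq_mul, ← sum_const,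
    ← sum_sub_distrib, mul_div_right_comm, mul_comm _ (#Q : ℝ), ← nsmul_eq_mul, ← sum_const]
  exact (abs_sum_le_sum_abs _ _).trans <| sum_le_sum fun q hq =>
    hx₀ x hx H hH q (hQ q hq).1 (hQ q hq).2.1 (hQ q hq).2.2 j hj

end MainTheorem

theorem stmt3 (δ M : ℝ) (K : ℕ) (ξ : ℝ)
    (hδ0 : 0 < δ) (hδ1 : δ < 1/2) (hK : 2 ≤ K) (hξ : 1 < ξ) (hM : 2 ≤ M) :
    ∃ C : ℝ, 0 < C ∧ ∃ x₀ : ℝ, ∀ x ≥ x₀, ∀ H ∈ frakH1 δ ξ x, ∀ j ∈ ({1, 2} : Set ℕ),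
      |EE δ x (fun b => ∑ q ∈ QH δ ξ x H,
            (∑ n ∈ Finset.Ioc (-((K * yy δ x : ℕ) : ℤ)) ((yy δ x : ℤ)),
              lam M (zz δ x) K b H q n) ^ j) -
          (((K : ℝ) + 1) * (yy δ x : ℝ)) ^ j * ((QH δ ξ x H).card : ℝ)| ≤
        C * (((K : ℝ) + 1) * (yy δ x : ℝ)) ^ j * ((QH δ ξ x H).card : ℝ) / H ^ (M - 2) := by
  obtain ⟨C, hC, x₀, hbound⟩ := stmt3_general hδ0 hM K
  exact ⟨C, hC, x₀, fun x hx H ⟨k, _, hH⟩ => hbound x hx H hH.2.1 _ fun _ =>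
    prime_of_mem_QH (zero_lt_one.trans hξ) ⟨k, hH⟩⟩
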